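/- Let α ∈ (2,3), n ≥ 2, let γ ∈ H^{(1+α)/2,2}(ℝ/ℤ,ℝⁿ) be injective and regular, and let h ∈ H^{(1+α)/2,2}(ℝ/ℤ,ℝⁿ). Then δE^α(γ;h) = lim_{ε↘0} ∬_{U_ε} { 2·(1/|γ(u+w)−γ(u)|^α − 1/d_γ(u+w,u)^α)·⟨γ'(u)/|γ'(u)|², h'(u)⟩ − α·( ⟨γ(u+w)−γ(u), h(u+w)−h(u)⟩/|γ(u+w)−γ(u)|^{α+2} − (d/dτ)|_{τ=0} d_{γ+τh}(u+w,u) / d_γ(u+w,u)^{α+1} ) } · |γ'(u+w)|·|γ'(u)| dw du; in particular the limit on the right-hand side exists. -/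

import Mathlib

open MeasureTheory Filter Set
open scoped RealInnerProductSpace ENNReal Topology

noncomputable section

/-- `ℝⁿ` -/
abbrev Rn (n : ℕ) := EuclideanSpace ℝ (Fin n)

variable {n : ℕ}

/-- A 1-periodic curve is injective as a map on `ℝ/ℤ`. -/
def PerInjective (γ : ℝ → Rn n) : Prop :=
  ∀ u v : ℝ, γ u = γ v → ∃ k : ℤ, v = u + k

/-- `γ` is a regular curve: `γ'(u) ≠ 0` for all `u`. -/
def RegularCurve (γ : ℝ → Rn n) : Prop := ∀ u : ℝ, deriv γ u ≠ 0

/-- `γ` is parametrized by arc-length: `|γ'(u)| = 1` for all `u`. -/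
def ArcLengthParam (γ : ℝ → Rn n) : Prop := ∀ u : ℝ, ‖deriv γ u‖ = 1

/-- The length `L(γ) = ∫₀¹ |γ'(θ)| dθ` of the closed curve `γ`. -/
def curveLen (γ : ℝ → Rn n) : ℝ := ∫ θ in (0:ℝ)..1, ‖deriv γ θ‖

/-- The arc length `L(γ|_{[u,u+w]}) = |∫_u^{u+w} |γ'(θ)| dθ|`. -/
def arcLen (γ : ℝ → Rn n) (u w : ℝ) : ℝ := |∫ θ in u..(u + w), ‖deriv γ θ‖|

/-- The intrinsic distance `d_γ(u+w,u)`. -/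
def idist (γ : ℝ → Rn n) (u w : ℝ) : ℝ :=
  min (arcLen γ u w) (curveLen γ - arcLen γ u w)

/-- The integrand of the O'Hara energy `E^α`. -/
def ohIntegrand (α : ℝ) (γ : ℝ → Rn n) (u w : ℝ) : ℝ :=
  (1 / ‖γ (u + w) - γ u‖ ^ α - 1 / idist γ u w ^ α) * ‖deriv γ (u + w)‖ * ‖deriv γ u‖

/-- The O'Hara energy `E^α`, with values in `[0,∞]`. -/
def oharaE (α : ℝ) (γ : ℝ → Rn n) : ℝ≥0∞ :=
  ∫⁻ u in Ioc (0:ℝ) 1, ∫⁻ w in Ioo (-(1:ℝ)/2) (1/2), ENNReal.ofReal (ohIntegrand α γ u w)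

/-- The O'Hara energy `E^α` as a real number. -/
def oharaER (α : ℝ) (γ : ℝ → Rn n) : ℝ := (oharaE α γ).toReal

/-- `[−1/2,−ε] ∪ [ε,1/2]`, the `w`-section of `U_ε`. -/
def Wset (ε : ℝ) : Set ℝ := Icc (-(1:ℝ)/2) (-ε) ∪ Icc ε (1/2)

/-- The truncated O'Hara energy `E^α_ε`, an integral over `U_ε`. -/
def oharaEeps (α ε : ℝ) (γ : ℝ → Rn n) : ℝ :=
  ∫ u in Ioc (0:ℝ) 1, ∫ w in Wset ε, ohIntegrand α γ u w

/-- `F` has directional (Gâteaux) derivative `d` at `γ` in direction `h`. -/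
def HasDirDeriv (F : (ℝ → Rn n) → ℝ) (γ h : ℝ → Rn n) (d : ℝ) : Prop :=
  Tendsto (fun τ : ℝ => (F (γ + τ • h) - F γ) / τ) (𝓝[≠] (0:ℝ)) (𝓝 d)

/-- Squared Gagliardo seminorm `[f]²_{H^{s,2}}` of a 1-periodic map. -/
def gagliardoSq (s : ℝ) {E : Type*} [NormedAddCommGroup E] (f : ℝ → E) : ℝ≥0∞ :=
  ∫⁻ u in Ioc (0:ℝ) 1, ∫⁻ w in Ioo (-(1:ℝ)/2) (1/2),
    ENNReal.ofReal (‖f (u + w) - f u‖ ^ 2 / |w| ^ (1 + 2 * s))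

/-- Membership in the fractional Sobolev space `H^{1+σ,2}(ℝ/ℤ,ℝⁿ)`, `σ ∈ (0,1)`:
a 1-periodic `C¹` function whose derivative has finite Gagliardo seminorm of order `σ`. -/
def MemH1 (σ : ℝ) (γ : ℝ → Rn n) : Prop :=
  Function.Periodic γ 1 ∧ ContDiff ℝ 1 γ ∧ gagliardoSq σ (deriv γ) < ⊤

/-- The norm of `H^{1+σ,2}(ℝ/ℤ,ℝⁿ)`. -/
def H1Norm (σ : ℝ) (γ : ℝ → Rn n) : ℝ :=
  Real.sqrt (∫ u in Ioc (0:ℝ) 1, (‖γ u‖ ^ 2 + ‖deriv γ u‖ ^ 2)) +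
    Real.sqrt ((gagliardoSq σ (deriv γ)).toReal)

/-- Membership of a 1-periodic map in `L²(ℝ/ℤ)`. -/
def MemL2per {E : Type*} [NormedAddCommGroup E] (f : ℝ → E) : Prop :=
  Function.Periodic f 1 ∧ AEStronglyMeasurable f (volume : Measure ℝ) ∧
    IntegrableOn (fun u => ‖f u‖ ^ 2) (Ioc (0:ℝ) 1) volume

/-- Membership in the fractional Sobolev space `H^{s,2}(ℝ/ℤ)`, `s ∈ (0,1)`. -/
def MemHs0 (s : ℝ) {E : Type*} [NormedAddCommGroup E] (f : ℝ → E) : Prop :=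
  MemL2per f ∧ gagliardoSq s f < ⊤

/-- The norm of `H^{s,2}(ℝ/ℤ)` for `s ∈ (0,1)`: `‖f‖_{L²} + [f]_{H^{s,2}}`. -/
def Hs0Norm (s : ℝ) {E : Type*} [NormedAddCommGroup E] (f : ℝ → E) : ℝ :=
  Real.sqrt (∫ u in Ioc (0:ℝ) 1, ‖f u‖ ^ 2) + Real.sqrt ((gagliardoSq s f).toReal)

/-- The `k`-th Fourier coefficient (`j`-th component) of a 1-periodic curve. -/
def fCoef (γ : ℝ → Rn n) (k : ℤ) (j : Fin n) : ℂ :=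
  ∫ u in (0:ℝ)..1, (γ u j : ℂ) * Complex.exp ((-2) * (Real.pi : ℂ) * Complex.I * (k : ℂ) * (u : ℂ))

/-- Membership in `H^{s,2}(ℝ/ℤ,ℝⁿ)` via the Fourier characterization:
`((1+|k|²)^{s/2} γ̂(k))_k ∈ ℓ²`. -/
def MemHF (s : ℝ) (γ : ℝ → Rn n) : Prop :=
  Function.Periodic γ 1 ∧ Continuous γ ∧
    Summable (fun k : ℤ => (1 + (k : ℝ) ^ 2) ^ s * ∑ j, ‖fCoef γ k j‖ ^ 2)

/-- The squared Fourier norm of `H^{s,2}(ℝ/ℤ,ℝⁿ)`. -/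
def fNormSq (s : ℝ) (γ : ℝ → Rn n) : ℝ :=
  ∑' k : ℤ, (1 + (k : ℝ) ^ 2) ^ s * ∑ j, ‖fCoef γ k j‖ ^ 2

/-- C¹-norm of a 1-periodic map. -/
def c1Norm (f : ℝ → Rn n) : ℝ := ⨆ u : Icc (0:ℝ) 1, (‖f u.1‖ + ‖deriv f u.1‖)

/-- The integrand of `Q(γ,h)`. -/
def Qintegrand (α : ℝ) (γ h : ℝ → Rn n) (u w : ℝ) : ℝ :=
  ⟪deriv γ u, deriv h u⟫ / |w| ^ α
    - ⟪γ (u + w) - γ u, h (u + w) - h u⟫ / |w| ^ (α + 2)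

/-- The integrand of `R(γ,h)`. -/
def Rintegrand (α : ℝ) (γ h : ℝ → Rn n) (u w : ℝ) : ℝ :=
  2 * ⟪deriv γ u, deriv h u⟫ * (1 / ‖γ (u + w) - γ u‖ ^ α - 1 / |w| ^ α)
    - α * ⟪γ (u + w) - γ u, h (u + w) - h u⟫ *
        (1 / ‖γ (u + w) - γ u‖ ^ (α + 2) - 1 / |w| ^ (α + 2))

/-- `R(γ,h)`, an absolutely convergent double integral over `(ℝ/ℤ) × [−1/2,1/2]`. -/
def Rval (α : ℝ) (γ h : ℝ → Rn n) : ℝ :=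
  ∫ p in (Ioc (0:ℝ) 1) ×ˢ (Icc (-(1:ℝ)/2) (1/2)), Rintegrand α γ h p.1 p.2

/-! Near the diagonal `|γ(u+w) - γ(u)|` and the arc length are `|w|` times the norm of the mean
velocity and the mean speed. With `v` the velocity at the base point, `‖v‖ * (mean speed - ‖mean
velocity‖)` is a difference of two Cauchy–Schwarz defects against `v`, each quadratic in the
oscillation of the velocity; so, along `γ + τ • h`, it is bounded and Lipschitz in `τ` by the mean
square oscillations of `γ'` and `h'`. Divided by `|w| ^ α` these are integrable, since `γ'` and `h'`
have finite Gagliardo seminorm of order `(α - 1) / 2`, and one may differentiate under the integral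
sign. Exchanging the endpoints of each arc moves the whole variation of the speeds to the base
point; the resulting integrand is still absolutely integrable, so its truncated integrals converge
by dominated convergence. -/

/-- `f` is bounded by `B` and `B`-Lipschitz on `S`. A family `τ ↦ f τ` of integrands with this
property, `B` integrable, can be differentiated under the integral sign; a single constant serves
for both bounds so that the class is stable under products. -/
structure BddLipOn {T E : Type*} [PseudoMetricSpace T] [SeminormedAddCommGroup E]
    (f : T → E) (B : ℝ) (S : Set T) : Prop where
  norm_le : ∀ τ ∈ S, ‖f τ‖ ≤ B
  norm_sub_le : ∀ τ₁ ∈ S, ∀ τ₂ ∈ S, ‖f τ₁ - f τ₂‖ ≤ B * dist τ₁ τ₂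

namespace BddLipOn

section Seminormed

variable {T E : Type*} [PseudoMetricSpace T] [SeminormedAddCommGroup E] {S : Set T}
  {f g : T → E} {B C : ℝ}

lemma congr (hf : BddLipOn f B S) (h : EqOn g f S) : BddLipOn g B S where
  norm_le τ hτ := h hτ ▸ hf.norm_le τ hτ
  norm_sub_le τ₁ h₁ τ₂ h₂ := h h₁ ▸ h h₂ ▸ hf.norm_sub_le τ₁ h₁ τ₂ h₂

lemma mono (hf : BddLipOn f B S) (h : B ≤ C) : BddLipOn f C S where
  norm_le τ hτ := (hf.norm_le τ hτ).trans h
  norm_sub_le τ₁ h₁ τ₂ h₂ := (hf.norm_sub_le τ₁ h₁ τ₂ h₂).trans (by gcongr)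

protected lemma add (hf : BddLipOn f B S) (hg : BddLipOn g C S) :
    BddLipOn (fun τ => f τ + g τ) (B + C) S where
  norm_le τ hτ := norm_add_le_of_le (hf.norm_le τ hτ) (hg.norm_le τ hτ)
  norm_sub_le τ₁ h₁ τ₂ h₂ := by
    rw [add_sub_add_comm, add_mul]
    exact norm_add_le_of_le (hf.norm_sub_le τ₁ h₁ τ₂ h₂) (hg.norm_sub_le τ₁ h₁ τ₂ h₂)

protected lemma sub (hf : BddLipOn f B S) (hg : BddLipOn g C S) :
    BddLipOn (fun τ => f τ - g τ) (B + C) S where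
  norm_le τ hτ := norm_sub_le_of_le (hf.norm_le τ hτ) (hg.norm_le τ hτ)
  norm_sub_le τ₁ h₁ τ₂ h₂ := by
    rw [sub_sub_sub_comm, add_mul]
    exact norm_sub_le_of_le (hf.norm_sub_le τ₁ h₁ τ₂ h₂) (hg.norm_sub_le τ₁ h₁ τ₂ h₂)

protected lemma norm (hf : BddLipOn f B S) : BddLipOn (fun τ => ‖f τ‖) B S where
  norm_le τ hτ := (norm_norm _).trans_le (hf.norm_le τ hτ)
  norm_sub_le τ₁ h₁ τ₂ h₂ := (abs_norm_sub_norm_le _ _).trans (hf.norm_sub_le τ₁ h₁ τ₂ h₂)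

protected lemma min {f g : T → ℝ} (hf : BddLipOn f B S) (hg : BddLipOn g B S) :
    BddLipOn (fun τ => min (f τ) (g τ)) B S where
  norm_le τ hτ := abs_min_le_max_abs_abs.trans (max_le (hf.norm_le τ hτ) (hg.norm_le τ hτ))
  norm_sub_le τ₁ h₁ τ₂ h₂ := (abs_min_sub_min_le_max _ _ _ _).trans
    (max_le (hf.norm_sub_le τ₁ h₁ τ₂ h₂) (hg.norm_sub_le τ₁ h₁ τ₂ h₂))

lemma const_smul [NormedSpace ℝ E] (k : ℝ) (hf : BddLipOn f B S) :
    BddLipOn (fun τ => k • f τ) (|k| * B) S where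
  norm_le τ hτ := by
    rw [norm_smul, Real.norm_eq_abs]
    gcongr
    exact hf.norm_le τ hτ
  norm_sub_le τ₁ h₁ τ₂ h₂ := by
    rw [← smul_sub, norm_smul, Real.norm_eq_abs, mul_assoc]
    gcongr
    exact hf.norm_sub_le τ₁ h₁ τ₂ h₂

lemma const_mul {f : T → ℝ} (k : ℝ) (hf : BddLipOn f B S) :
    BddLipOn (fun τ => k * f τ) (|k| * B) S :=
  hf.const_smul k

end Seminormed

section Bilinear

variable {T E F G : Type*} [PseudoMetricSpace T] [SeminormedAddCommGroup E] [NormedSpace ℝ E]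
  [SeminormedAddCommGroup F] [NormedSpace ℝ F] [SeminormedAddCommGroup G] [NormedSpace ℝ G]
  {S : Set T} {B C : ℝ}

lemma bilinear (L : E →L[ℝ] F →L[ℝ] G) (hL : ‖L‖ ≤ 1) {f : T → E} {g : T → F}
    (hf : BddLipOn f B S) (hg : BddLipOn g C S) :
    BddLipOn (fun τ => L (f τ) (g τ)) (2 * (B * C)) S := by
  have norm_apply_le : ∀ (x : E) (y : F) {a b : ℝ}, ‖x‖ ≤ a → ‖y‖ ≤ b → ‖L x y‖ ≤ a * b :=
    fun x y a b hx hy => (L.le_of_opNorm₂_le_of_le hL hx hy).trans_eq (by rw [one_mul])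
  refine ⟨fun τ hτ => ?_, fun τ₁ h₁ τ₂ h₂ => ?_⟩
  · have hB := (norm_nonneg _).trans (hf.norm_le τ hτ)
    have hC := (norm_nonneg _).trans (hg.norm_le τ hτ)
    have := norm_apply_le _ _ (hf.norm_le τ hτ) (hg.norm_le τ hτ)
    linarith [mul_nonneg hB hC]
  · have split : L (f τ₁) (g τ₁) - L (f τ₂) (g τ₂) =
        L (f τ₁) (g τ₁ - g τ₂) + L (f τ₁ - f τ₂) (g τ₂) := by
      simp only [map_sub, FunLike.coe_sub, Pi.sub_apply]
      abel
    calc ‖L (f τ₁) (g τ₁) - L (f τ₂) (g τ₂)‖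
        ≤ B * (C * dist τ₁ τ₂) + B * dist τ₁ τ₂ * C := split ▸ norm_add_le_of_le
          (norm_apply_le _ _ (hf.norm_le τ₁ h₁) (hg.norm_sub_le τ₁ h₁ τ₂ h₂))
          (norm_apply_le _ _ (hf.norm_sub_le τ₁ h₁ τ₂ h₂) (hg.norm_le τ₂ h₂))
      _ = 2 * (B * C) * dist τ₁ τ₂ := by ring

protected lemma mul {f g : T → ℝ} (hf : BddLipOn f B S) (hg : BddLipOn g C S) :
    BddLipOn (fun τ => f τ * g τ) (2 * (B * C)) S :=
  hf.bilinear (ContinuousLinearMap.mul ℝ ℝ) (ContinuousLinearMap.opNorm_mul_le ℝ ℝ) hg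

protected lemma inner {V : Type*} [SeminormedAddCommGroup V] [InnerProductSpace ℝ V] {f g : T → V}
    (hf : BddLipOn f B S) (hg : BddLipOn g C S) :
    BddLipOn (fun τ => ⟪f τ, g τ⟫) (2 * (B * C)) S :=
  hf.bilinear (innerSL ℝ) (norm_innerSL_le ℝ) hg

end Bilinear

lemma add_smul {E : Type*} [SeminormedAddCommGroup E] [NormedSpace ℝ E] {S : Set ℝ}
    (hS : S ⊆ Icc (-1) 1) (p q : E) : BddLipOn (fun τ : ℝ => p + τ • q) (‖p‖ + ‖q‖) S where
  norm_le τ hτ := by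
    refine norm_add_le_of_le le_rfl ((norm_smul _ _).trans_le ?_)
    exact mul_le_of_le_one_left (norm_nonneg _) (abs_le.2 (hS hτ))
  norm_sub_le τ₁ _ τ₂ _ := by
    rw [add_sub_add_left_eq_sub, ← sub_smul, norm_smul, ← dist_eq_norm, mul_comm]
    gcongr
    exact le_add_of_nonneg_left (norm_nonneg _)

lemma intervalIntegral {T E : Type*} [PseudoMetricSpace T] [NormedAddCommGroup E]
    [NormedSpace ℝ E] {S : Set T} {f : T → ℝ → E} {B : ℝ → ℝ} {a b : ℝ} (hab : a ≤ b)
    (hB : IntervalIntegrable B volume a b)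
    (hint : ∀ τ ∈ S, IntervalIntegrable (f τ) volume a b)
    (hf : ∀ x ∈ Icc a b, BddLipOn (fun τ => f τ x) (B x) S) :
    BddLipOn (fun τ => ∫ x in a..b, f τ x) (∫ x in a..b, B x) S where
  norm_le τ hτ := intervalIntegral.norm_integral_le_of_norm_le hab
    (.of_forall fun x hx => (hf x (Ioc_subset_Icc_self hx)).norm_le τ hτ) hB
  norm_sub_le τ₁ h₁ τ₂ h₂ := by
    rw [← intervalIntegral.integral_sub (hint τ₁ h₁) (hint τ₂ h₂),
      ← intervalIntegral.integral_mul_const]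
    exact intervalIntegral.norm_integral_le_of_norm_le hab
      (.of_forall fun x hx => (hf x (Ioc_subset_Icc_self hx)).norm_sub_le τ₁ h₁ τ₂ h₂)
      (hB.mul_const _)

end BddLipOn

section Rpow

variable {T : Type*} [PseudoMetricSpace T] {S : Set T} {f g : T → ℝ} {A B c p : ℝ}

lemma abs_rpow_neg_sub_rpow_neg_le {x y : ℝ} (hc : 0 < c) (hp : 0 ≤ p) (hx : c ≤ x)
    (hy : c ≤ y) : |x ^ (-p) - y ^ (-p)| ≤ p * c ^ (-(p + 1)) * |x - y| := by
  refine (convex_Ici c).norm_image_sub_le_of_norm_hasDerivWithin_le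
    (f := fun z : ℝ => z ^ (-p)) (f' := fun z => -p * z ^ (-p - 1)) (fun z hz => ?_)
    (fun z hz => ?_) hy hx
  · exact (Real.hasDerivAt_rpow_const (.inl (hc.trans_le hz).ne')).hasDerivWithinAt
  · have hz0 : 0 < z := hc.trans_le hz
    rw [norm_mul, norm_neg, Real.norm_of_nonneg hp, Real.norm_of_nonneg (by positivity),
      show -p - 1 = -(p + 1) by ring]
    exact mul_le_mul_of_nonneg_left (Real.rpow_le_rpow_of_nonpos hc hz (by linarith)) hp

lemma BddLipOn.rpow_neg (hc : 0 < c) (hp : 0 ≤ p) (hf : BddLipOn f B S)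
    (hcf : ∀ τ ∈ S, c ≤ f τ) :
    BddLipOn (fun τ => f τ ^ (-p)) (c ^ (-p) + p * c ^ (-(p + 1)) * B) S where
  norm_le τ hτ := by
    have hB : 0 ≤ B := (norm_nonneg _).trans (hf.norm_le τ hτ)
    rw [Real.norm_of_nonneg (Real.rpow_nonneg (hc.le.trans (hcf τ hτ)) _)]
    refine (Real.rpow_le_rpow_of_nonpos hc (hcf τ hτ) (by linarith)).trans ?_
    exact le_add_of_nonneg_right (by positivity)
  norm_sub_le τ₁ h₁ τ₂ h₂ := by
    refine (abs_rpow_neg_sub_rpow_neg_le hc hp (hcf τ₁ h₁) (hcf τ₂ h₂)).trans ?_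
    rw [add_mul, mul_assoc _ B]
    refine le_add_of_nonneg_of_le (by positivity) ?_
    gcongr
    exact hf.norm_sub_le τ₁ h₁ τ₂ h₂

lemma rpow_neg_sub_rpow_neg_eq_mul_integral {x y : ℝ} (hx : 0 < x) (hy : 0 < y) (p : ℝ) :
    x ^ (-p) - y ^ (-p) =
      p * ((y - x) * ∫ t in (0 : ℝ)..1, (x + t * (y - x)) ^ (-(p + 1))) := by
  have pos : ∀ t ∈ uIcc (0 : ℝ) 1, 0 < x + t * (y - x) := fun t ht =>
    (convex_Ioi (0 : ℝ)).add_smul_sub_mem hx hy (uIcc_of_le (zero_le_one' ℝ) ▸ ht)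
  have deriv_eq : ∀ t ∈ uIcc (0 : ℝ) 1, HasDerivAt (fun t : ℝ => (x + t * (y - x)) ^ (-p))
      ((1 * (y - x)) * -p * (x + t * (y - x)) ^ (-p - 1)) t := fun t ht =>
    (((hasDerivAt_id t).mul_const (y - x)).const_add x).rpow_const (.inl (pos t ht).ne')
  have ftc := intervalIntegral.integral_eq_sub_of_hasDerivAt deriv_eq (.const_mul
    (ContinuousOn.intervalIntegrable (.rpow_const (by fun_prop) fun t ht => .inl (pos t ht).ne')) _)
  rw [intervalIntegral.integral_const_mul] at ftc
  simp only [one_mul, zero_mul, add_zero, add_sub_cancel, neg_add'] at ftc ⊢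
  linarith

/-- The secant slope of `z ↦ z ^ (-p)` between `f` and `g` is an average of derivatives, hence
again bounded and Lipschitz. -/
lemma BddLipOn.rpow_neg_sub_rpow_neg (hc : 0 < c) (hp : 0 ≤ p) (hf : BddLipOn f A S)
    (hg : BddLipOn g A S) (hfg : BddLipOn (fun τ => g τ - f τ) B S) (hcf : ∀ τ ∈ S, c ≤ f τ)
    (hcg : ∀ τ ∈ S, c ≤ g τ) :
    BddLipOn (fun τ => f τ ^ (-p) - g τ ^ (-p))
      (2 * p * (c ^ (-(p + 1)) + (p + 1) * c ^ (-(p + 1 + 1)) * A) * B) S := by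
  have le_segment : ∀ t ∈ Icc (0 : ℝ) 1, ∀ τ ∈ S, c ≤ f τ + t * (g τ - f τ) :=
    fun t ht τ hτ => (convex_Ici c).add_smul_sub_mem (hcf τ hτ) (hcg τ hτ) ht
  have segment : ∀ t ∈ Icc (0 : ℝ) 1, BddLipOn (fun τ => f τ + t * (g τ - f τ)) A S :=
    fun t ht => (((hf.const_mul (1 - t)).add (hg.const_mul t)).congr
      fun τ _ => by ring).mono (by
        rw [abs_of_nonneg ht.1, abs_of_nonneg (sub_nonneg.2 ht.2)]
        linarith)
  have slope : BddLipOn (fun τ => ∫ t in (0 : ℝ)..1, (f τ + t * (g τ - f τ)) ^ (-(p + 1)))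
      (∫ _ in (0 : ℝ)..1, (c ^ (-(p + 1)) + (p + 1) * c ^ (-(p + 1 + 1)) * A)) S :=
    .intervalIntegral zero_le_one (by simp)
      (fun τ hτ => ContinuousOn.intervalIntegrable (.rpow_const (by fun_prop) fun t ht =>
        .inl (hc.trans_le (le_segment t (uIcc_of_le (zero_le_one' ℝ) ▸ ht) τ hτ)).ne'))
      fun t ht => (segment t ht).rpow_neg hc (by linarith) (le_segment t ht)
  refine (((hfg.mul slope).const_mul p).congr fun τ hτ =>
    rpow_neg_sub_rpow_neg_eq_mul_integral (hc.trans_le (hcf τ hτ)) (hc.trans_le (hcg τ hτ)) p).mono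
    (le_of_eq ?_)
  simp only [intervalIntegral.integral_const, sub_zero, one_smul, abs_of_nonneg hp]
  ring

end Rpow

section CauchySchwarz

variable {V : Type*} [NormedAddCommGroup V] [InnerProductSpace ℝ V]

/-- The defect in the Cauchy–Schwarz inequality. -/
def csDefect (a b : V) : ℝ := ‖a‖ * ‖b‖ - ⟪a, b⟫

lemma csDefect_eq (a b : V) :
    csDefect a b = 1 / 2 * (⟪a - b, a - b⟫ - (‖a‖ - ‖b‖) * (‖a‖ - ‖b‖)) := by
  rw [real_inner_sub_sub_self, real_inner_self_eq_norm_sq, real_inner_self_eq_norm_sq, csDefect]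
  ring

lemma norm_sub_norm_eq_inner_mul_inv (a : V) {b : V} (hb : b ≠ 0) :
    ‖a‖ - ‖b‖ = ⟪a - b, a + b⟫ * (‖a‖ + ‖b‖) ^ (-1 : ℝ) := by
  have : 0 < ‖a‖ + ‖b‖ := add_pos_of_nonneg_of_pos (norm_nonneg a) (norm_pos_iff.2 hb)
  rw [Real.rpow_neg_one, eq_mul_inv_iff_mul_eq₀ this.ne', inner_add_right, inner_sub_left,
    inner_sub_left, real_inner_self_eq_norm_sq, real_inner_self_eq_norm_sq, real_inner_comm]
  ring

variable {T : Type*} [PseudoMetricSpace T] {S : Set T} {a b : T → V} {c d M : ℝ}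

lemma BddLipOn.norm_sub_norm (hc : 0 < c) (ha : BddLipOn a M S) (hb : BddLipOn b M S)
    (hab : BddLipOn (fun τ => a τ - b τ) d S) (hcb : ∀ τ ∈ S, c ≤ ‖b τ‖) :
    BddLipOn (fun τ => ‖a τ‖ - ‖b τ‖) (8 * M * (c ^ (-1 : ℝ) + c ^ (-2 : ℝ) * (2 * M)) * d) S := by
  have inv : BddLipOn (fun τ => (‖a τ‖ + ‖b τ‖) ^ (-1 : ℝ)) _ S :=
    (ha.norm.add hb.norm).rpow_neg hc zero_le_one
      fun τ hτ => (hcb τ hτ).trans (le_add_of_nonneg_left (norm_nonneg _))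
  refine (((hab.inner (ha.add hb)).mul inv).congr fun τ hτ => norm_sub_norm_eq_inner_mul_inv _
    (norm_pos_iff.1 (hc.trans_le (hcb τ hτ)))).mono (le_of_eq ?_)
  norm_num
  ring

lemma exists_bddLipOn_csDefect (hc : 0 < c) (M : ℝ) (S : Set T) :
    ∃ K, 0 ≤ K ∧ ∀ {a b : T → V} {d : ℝ}, BddLipOn a M S → BddLipOn b M S →
      BddLipOn (fun τ => a τ - b τ) d S → (∀ τ ∈ S, c ≤ ‖b τ‖) →
      BddLipOn (fun τ => csDefect (a τ) (b τ)) (K * d ^ 2) S := by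
  refine ⟨1 + (8 * M * (c ^ (-1 : ℝ) + c ^ (-2 : ℝ) * (2 * M))) ^ 2, by positivity,
    fun {a b d} ha hb hab hcb => ?_⟩
  have hnorm := ha.norm_sub_norm hc hb hab hcb
  refine ((((hab.inner hab).sub (hnorm.mul hnorm)).const_mul (1 / 2)).congr
    fun τ _ => csDefect_eq _ _).mono (le_of_eq ?_)
  norm_num
  ring

lemma exists_bddLipOn_csDefect_add_smul {S : Set ℝ} (hS : S ⊆ Icc (-1) 1) (hc : 0 < c) (M : ℝ) :
    ∃ K, 0 ≤ K ∧ ∀ {p q p' q' : V}, ‖p‖ ≤ M → ‖q‖ ≤ M → ‖p'‖ ≤ M → ‖q'‖ ≤ M →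
      (∀ τ ∈ S, c ≤ ‖p' + τ • q'‖) →
      BddLipOn (fun τ : ℝ => csDefect (p + τ • q) (p' + τ • q'))
        (K * (‖p - p'‖ ^ 2 + ‖q - q'‖ ^ 2)) S := by
  obtain ⟨K, hK, bddLip⟩ := exists_bddLipOn_csDefect (V := V) hc (2 * M) S
  refine ⟨2 * K, by positivity, fun {p q p' q'} hp hq hp' hq' hcp => ?_⟩
  have difference : BddLipOn (fun τ : ℝ => p + τ • q - (p' + τ • q')) (‖p - p'‖ + ‖q - q'‖) S :=
    (BddLipOn.add_smul hS _ _).congr fun τ _ => by simp only [smul_sub]; abel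
  refine (bddLip ((BddLipOn.add_smul hS p q).mono (by linarith))
    ((BddLipOn.add_smul hS p' q').mono (by linarith)) difference hcp).mono ?_
  rw [mul_comm 2, mul_assoc]
  gcongr
  exact add_sq_le

end CauchySchwarz

/-- The mean of `f` over the segment from `u` to `u + w`; it is `f u` for `w = 0`. -/
def segMean {E : Type*} [NormedAddCommGroup E] [NormedSpace ℝ E] (f : ℝ → E) (u w : ℝ) : E :=
  ∫ x in (0 : ℝ)..1, f (u + x * w)

/-- The mean square oscillation of `f` around `f u` over the segment from `u` to `u + w`. -/
def segOsc {E : Type*} [NormedAddCommGroup E] (f : ℝ → E) (u w : ℝ) : ℝ :=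
  segMean (fun θ => ‖f θ - f u‖ ^ 2) u w

section Segments

variable {E : Type*} [NormedAddCommGroup E]

lemma continuous_segMean [NormedSpace ℝ E] {f : ℝ → E} (hf : Continuous f) :
    Continuous fun p : ℝ × ℝ => segMean f p.1 p.2 :=
  intervalIntegral.continuous_parametric_intervalIntegral_of_continuous'
    (f := fun (p : ℝ × ℝ) x => f (p.1 + x * p.2)) (by fun_prop) 0 1

lemma continuous_segOsc {f : ℝ → E} (hf : Continuous f) :
    Continuous fun p : ℝ × ℝ => segOsc f p.1 p.2 :=
  intervalIntegral.continuous_parametric_intervalIntegral_of_continuous'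
    (f := fun (p : ℝ × ℝ) x => ‖f (p.1 + x * p.2) - f p.1‖ ^ 2) (by fun_prop) 0 1

lemma segMean_nonneg {f : ℝ → ℝ} (hf : 0 ≤ f) (u w : ℝ) : 0 ≤ segMean f u w :=
  intervalIntegral.integral_nonneg zero_le_one fun _ _ => hf _

lemma segOsc_nonneg (f : ℝ → E) (u w : ℝ) : 0 ≤ segOsc f u w :=
  segMean_nonneg (fun _ => sq_nonneg _) u w

lemma segMean_mono {f g : ℝ → ℝ} (hf : Continuous f) (hg : Continuous g) (h : f ≤ g) (u w : ℝ) :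
    segMean f u w ≤ segMean g u w :=
  intervalIntegral.integral_mono zero_le_one (Continuous.intervalIntegrable (by fun_prop) _ _)
    (Continuous.intervalIntegrable (by fun_prop) _ _) fun _ => h _

lemma segMean_const_mul_add {f g : ℝ → ℝ} (hf : Continuous f) (hg : Continuous g) (k u w : ℝ) :
    segMean (fun θ => k * (f θ + g θ)) u w = k * (segMean f u w + segMean g u w) := by
  rw [segMean, intervalIntegral.integral_const_mul,
    intervalIntegral.integral_add (Continuous.intervalIntegrable (by fun_prop) _ _)
      (Continuous.intervalIntegrable (by fun_prop) _ _), segMean, segMean]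

lemma sq_segMean_le {f : ℝ → ℝ} (hf : Continuous f) (u w : ℝ) :
    segMean f u w ^ 2 ≤ segMean (fun θ => f θ ^ 2) u w := by
  have : IsProbabilityMeasure (volume.restrict (Ioc (0 : ℝ) 1)) := ⟨by simp⟩
  simp only [segMean, intervalIntegral.integral_of_le zero_le_one]
  refine ConvexOn.map_integral_le (even_two.convexOn_pow) (by fun_prop) isClosed_univ
    (by simp) ?_ ?_ <;>
  exact ((intervalIntegrable_iff_integrableOn_Ioc_of_le zero_le_one).1
    (Continuous.intervalIntegrable (by fun_prop) _ _))

variable [NormedSpace ℝ E] {f : ℝ → E}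

lemma segMean_zero_right [CompleteSpace E] (f : ℝ → E) (u : ℝ) : segMean f u 0 = f u := by
  simp [segMean]

lemma smul_segMean (f : ℝ → E) (u w : ℝ) : w • segMean f u w = ∫ θ in u..(u + w), f θ := by
  simp [segMean, mul_comm _ w]

lemma periodic_segMean {T : ℝ} (hf : Function.Periodic f T) (w : ℝ) :
    Function.Periodic (fun u => segMean f u w) T := fun u => by
  simp only [segMean, add_right_comm u T, hf _]

lemma norm_segMean_le_segMean_norm (f : ℝ → E) (u w : ℝ) :
    ‖segMean f u w‖ ≤ segMean (fun θ => ‖f θ‖) u w :=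
  intervalIntegral.norm_integral_le_integral_norm zero_le_one

lemma norm_segMean_le {C : ℝ} (hC : ∀ x, ‖f x‖ ≤ C) (u w : ℝ) : ‖segMean f u w‖ ≤ C := by
  simpa [segMean] using intervalIntegral.norm_integral_le_of_norm_le_const (a := 0) (b := 1)
    (f := fun x => f (u + x * w)) fun x _ => hC _

lemma segMean_add_smul {P H : ℝ → E} (hP : Continuous P) (hH : Continuous H) (τ u w : ℝ) :
    segMean (P + τ • H) u w = segMean P u w + τ • segMean H u w := by
  simp only [segMean, Pi.add_apply, Pi.smul_apply]
  rw [intervalIntegral.integral_add (Continuous.intervalIntegrable (by fun_prop) _ _)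
    (Continuous.intervalIntegrable (by fun_prop) _ _), intervalIntegral.integral_smul]

lemma segMean_sub_const [CompleteSpace E] (hf : Continuous f) (v : E) (u w : ℝ) :
    segMean (fun θ => f θ - v) u w = segMean f u w - v := by
  rw [segMean, intervalIntegral.integral_sub (Continuous.intervalIntegrable (by fun_prop) _ _)
    (by simp), intervalIntegral.integral_const, sub_zero, one_smul, segMean]

lemma sq_norm_segMean_sub_le_segOsc [CompleteSpace E] (hf : Continuous f) (u w : ℝ) :
    ‖segMean f u w - f u‖ ^ 2 ≤ segOsc f u w := by
  rw [← segMean_sub_const hf]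
  exact (pow_le_pow_left₀ (norm_nonneg _) (norm_segMean_le_segMean_norm _ _ _) 2).trans
    (sq_segMean_le (by fun_prop) u w)

lemma BddLipOn.segMean {T : Type*} [PseudoMetricSpace T] {S : Set T} {f : T → ℝ → E}
    {B : ℝ → ℝ} (hf : ∀ τ, Continuous (f τ)) (hB : Continuous B)
    (h : ∀ x, BddLipOn (fun τ => f τ x) (B x) S) (u w : ℝ) :
    BddLipOn (fun τ => segMean (f τ) u w) (segMean B u w) S :=
  .intervalIntegral zero_le_one (Continuous.intervalIntegrable (by fun_prop) _ _)
    (fun τ _ => Continuous.intervalIntegrable (by have := hf τ; fun_prop) _ _) fun _ _ => h _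

end Segments

section MeanSpeedDefect

variable {V : Type*} [NormedAddCommGroup V] [InnerProductSpace ℝ V] [CompleteSpace V]

lemma segMean_csDefect {f : ℝ → V} (hf : Continuous f) (v : V) (u w : ℝ) :
    segMean (fun θ => csDefect (f θ) v) u w =
      segMean (fun θ => ‖f θ‖) u w * ‖v‖ - ⟪segMean f u w, v⟫ := by
  have inner_comm := ((innerSL ℝ v).intervalIntegral_comp_comm (μ := volume) (a := 0) (b := 1)
    (f := fun x => f (u + x * w)) (Continuous.intervalIntegrable (by fun_prop) _ _))
  simp only [segMean, csDefect]
  rw [intervalIntegral.integral_sub (Continuous.intervalIntegrable (by fun_prop) _ _)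
    (Continuous.intervalIntegrable (by fun_prop) _ _), intervalIntegral.integral_mul_const,
    real_inner_comm]
  simp only [innerSL_apply_apply, real_inner_comm v] at inner_comm ⊢
  rw [inner_comm]

lemma segMean_norm_sub_norm_segMean_eq {f : ℝ → V} (hf : Continuous f) {v : V} (hv : v ≠ 0)
    (u w : ℝ) : segMean (fun θ => ‖f θ‖) u w - ‖segMean f u w‖ =
      (segMean (fun θ => csDefect (f θ) v) u w - csDefect (segMean f u w) v) *
        ‖v‖ ^ (-1 : ℝ) := by
  rw [segMean_csDefect hf, csDefect, Real.rpow_neg_one,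
    eq_mul_inv_iff_mul_eq₀ (norm_ne_zero_iff.2 hv)]
  ring

lemma exists_bddLipOn_segMean_norm_sub_norm_segMean {S : Set ℝ} (hS : S ⊆ Icc (-1) 1) {c M : ℝ}
    (hc : 0 < c) (hM : 0 ≤ M) : ∃ K, 0 ≤ K ∧ ∀ {P H : ℝ → V}, Continuous P → Continuous H →
      (∀ x, ‖P x‖ ≤ M) → (∀ x, ‖H x‖ ≤ M) → ∀ {u : ℝ}, (∀ τ ∈ S, c ≤ ‖(P + τ • H) u‖) → ∀ w,
      BddLipOn (fun τ => segMean (fun θ => ‖(P + τ • H) θ‖) u w - ‖segMean (P + τ • H) u w‖)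
        (K * (segOsc P u w + segOsc H u w)) S := by
  obtain ⟨K, hK, bddLip_cs⟩ := exists_bddLipOn_csDefect_add_smul (V := V) hS hc M
  refine ⟨4 * K * (c ^ (-1 : ℝ) + c ^ (-2 : ℝ) * (2 * M)), by positivity,
    fun {P H} hP hH hPM hHM {u} hcu w => ?_⟩
  have averaged : BddLipOn (fun τ : ℝ => segMean (fun θ => csDefect ((P + τ • H) θ)
      ((P + τ • H) u)) u w) (K * (segOsc P u w + segOsc H u w)) S :=
    (BddLipOn.segMean (fun τ => by unfold csDefect; fun_prop) (by fun_prop)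
      (fun x => bddLip_cs (hPM x) (hHM x) (hPM u) (hHM u) hcu) u w).mono
      (segMean_const_mul_add (by fun_prop) (by fun_prop) _ u w).le
  have at_mean : BddLipOn (fun τ : ℝ => csDefect (segMean (P + τ • H) u w) ((P + τ • H) u))
      (K * (segOsc P u w + segOsc H u w)) S := by
    simp only [segMean_add_smul hP hH]
    refine (bddLip_cs (norm_segMean_le hPM u w) (norm_segMean_le hHM u w) (hPM u) (hHM u)
      hcu).mono ?_
    gcongr
    exacts [sq_norm_segMean_sub_le_segOsc hP u w, sq_norm_segMean_sub_le_segOsc hH u w]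
  have inv : BddLipOn (fun τ : ℝ => ‖(P + τ • H) u‖ ^ (-1 : ℝ)) _ S :=
    ((BddLipOn.add_smul hS (P u) (H u)).mono (show _ ≤ 2 * M by
      linarith [hPM u, hHM u])).norm.rpow_neg hc zero_le_one hcu
  refine (((averaged.sub at_mean).mul inv).congr fun τ hτ => segMean_norm_sub_norm_segMean_eq
    (by fun_prop) (norm_pos_iff.1 (hc.trans_le (hcu τ hτ))) u w).mono (le_of_eq ?_)
  norm_num
  ring

end MeanSpeedDefect

section Derivatives

variable {E : Type*} [NormedAddCommGroup E]

lemma exists_norm_le_of_periodic {f : ℝ → E} {T : ℝ} (hf : Function.Periodic f T) (hT : T ≠ 0)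
    (hc : Continuous f) : ∃ M, ∀ x, ‖f x‖ ≤ M := by
  obtain ⟨M, hM⟩ := (hf.isBounded_of_continuous hT hc).exists_norm_le
  exact ⟨M, fun x => hM _ (mem_range_self x)⟩

variable [NormedSpace ℝ E] {f g : ℝ → E}

lemma deriv_add_smul (hf : ContDiff ℝ 1 f) (hg : ContDiff ℝ 1 g) (τ : ℝ) :
    deriv (f + τ • g) = deriv f + τ • deriv g := by
  ext1 x
  have hfx := hf.differentiable one_ne_zero x
  have hgx := hg.differentiable one_ne_zero x
  simp [deriv_add hfx (hgx.const_smul τ), deriv_const_smul_field]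

lemma periodic_deriv {T : ℝ} (hf : Function.Periodic f T) :
    Function.Periodic (deriv f) T := fun x => by
  rw [← deriv_comp_add_const, funext hf]

lemma sub_eq_smul_segMean [CompleteSpace E] (hf : ContDiff ℝ 1 f) (u w : ℝ) :
    f (u + w) - f u = w • segMean (deriv f) u w := by
  rw [smul_segMean, intervalIntegral.integral_deriv_eq_sub
    (fun x _ => (hf.differentiable one_ne_zero) x)
    ((hf.continuous_deriv le_rfl).intervalIntegrable _ _)]

lemma norm_sub_le_integral_norm_deriv [CompleteSpace E] (hf : ContDiff ℝ 1 f) {a b : ℝ}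
    (hab : a ≤ b) : ‖f b - f a‖ ≤ ∫ θ in a..b, ‖deriv f θ‖ := by
  rw [← intervalIntegral.integral_deriv_eq_sub (fun x _ => (hf.differentiable one_ne_zero) x)
    ((hf.continuous_deriv le_rfl).intervalIntegrable _ _)]
  exact intervalIntegral.norm_integral_le_integral_norm hab

end Derivatives

/-- The mean speed of `γ` over the segment from `u` to `u + w`. -/
def meanSpeed (γ : ℝ → Rn n) (u w : ℝ) : ℝ := segMean (fun θ => ‖deriv γ θ‖) u w

section Curves

variable {γ h : ℝ → Rn n}

lemma continuous_meanSpeed (hγ : ContDiff ℝ 1 γ) :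
    Continuous fun p : ℝ × ℝ => meanSpeed γ p.1 p.2 :=
  continuous_segMean (hγ.continuous_deriv le_rfl).norm

lemma arcLen_eq_abs_mul_meanSpeed (γ : ℝ → Rn n) (u w : ℝ) :
    arcLen γ u w = |w| * meanSpeed γ u w := by
  rw [arcLen, ← smul_segMean, smul_eq_mul, abs_mul,
    abs_of_nonneg (segMean_nonneg (fun _ => norm_nonneg _) u w), meanSpeed]

lemma curveLen_eq_meanSpeed (γ : ℝ → Rn n) : curveLen γ = meanSpeed γ 0 1 := by
  simp [curveLen, meanSpeed, segMean]

lemma idist_eq_min_meanSpeed (γ : ℝ → Rn n) (u w : ℝ) : idist γ u w =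
    min (|w| * meanSpeed γ u w) (meanSpeed γ 0 1 - |w| * meanSpeed γ u w) := by
  rw [idist, arcLen_eq_abs_mul_meanSpeed, curveLen_eq_meanSpeed]

lemma continuous_idist (hγ : ContDiff ℝ 1 γ) :
    Continuous fun p : ℝ × ℝ => idist γ p.1 p.2 := by
  have := continuous_meanSpeed hγ
  simp only [idist_eq_min_meanSpeed]
  fun_prop

lemma arcLen_add_neg (γ : ℝ → Rn n) (u w : ℝ) : arcLen γ (u + w) (-w) = arcLen γ u w := by
  rw [arcLen, arcLen, add_neg_cancel_right, intervalIntegral.integral_symm, abs_neg]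

lemma idist_add_neg (γ : ℝ → Rn n) (u w : ℝ) : idist γ (u + w) (-w) = idist γ u w := by
  rw [idist, idist, arcLen_add_neg]

lemma periodic_idist {T : ℝ} (hγ : Function.Periodic γ T) (w : ℝ) :
    Function.Periodic (fun u => idist γ u w) T := fun u => by
  have : Function.Periodic (fun θ => ‖deriv γ θ‖) T := (periodic_deriv hγ).comp _
  simp only [idist_eq_min_meanSpeed, meanSpeed, periodic_segMean this w u]

lemma norm_sub_le_idist (hγ : ContDiff ℝ 1 γ) (hper : Function.Periodic γ 1) {u w : ℝ}
    (hw : |w| ≤ 1) : ‖γ (u + w) - γ u‖ ≤ idist γ u w := by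
  wlog hw0 : 0 ≤ w generalizing u w
  · have := this (u := u + w) (w := -w) (by rwa [abs_neg]) (by linarith)
    rwa [add_neg_cancel_right, idist_add_neg, norm_sub_rev] at this
  have speed_int : ∀ a b : ℝ, IntervalIntegrable (fun θ => ‖deriv γ θ‖) volume a b :=
    (hγ.continuous_deriv le_rfl).norm.intervalIntegrable
  have arcLen_eq : arcLen γ u w = ∫ θ in u..(u + w), ‖deriv γ θ‖ :=
    abs_of_nonneg (intervalIntegral.integral_nonneg (by linarith) fun _ _ => norm_nonneg _)
  have curveLen_eq : curveLen γ = ∫ θ in u..(u + 1), ‖deriv γ θ‖ := by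
    have speed_per : Function.Periodic (fun θ => ‖deriv γ θ‖) 1 := (periodic_deriv hper).comp _
    simpa [curveLen] using speed_per.intervalIntegral_add_eq 0 u
  have other_arc : ‖γ (u + w) - γ u‖ ≤ ∫ θ in (u + w)..(u + 1), ‖deriv γ θ‖ := by
    have := norm_sub_le_integral_norm_deriv hγ (a := u + w) (b := u + 1)
      (by linarith [le_abs_self w])
    rwa [hper, norm_sub_rev] at this
  refine le_min ?_ ?_
  · exact arcLen_eq ▸ norm_sub_le_integral_norm_deriv hγ (by linarith)
  · rw [curveLen_eq, arcLen_eq]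
    linarith [intervalIntegral.integral_add_adjacent_intervals (speed_int u (u + w))
      (speed_int (u + w) (u + 1))]

lemma segMean_deriv_ne_zero (hγ : ContDiff ℝ 1 γ) (hinj : PerInjective γ) (hreg : RegularCurve γ)
    {u w : ℝ} (hw : |w| < 1) : segMean (deriv γ) u w ≠ 0 := by
  rcases eq_or_ne w 0 with rfl | hw0
  · rw [segMean_zero_right]
    exact hreg u
  · intro mean_zero
    have chord_zero := sub_eq_smul_segMean hγ u w
    rw [mean_zero, smul_zero, sub_eq_zero] at chord_zero
    obtain ⟨k, hk⟩ := hinj _ _ chord_zero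
    obtain rfl : w = ((-k : ℤ) : ℝ) := by push_cast; linarith
    rw [← Int.cast_abs] at hw
    have : |(-k : ℤ)| < 1 := by exact_mod_cast hw
    exact hw0 (by simp [Int.abs_lt_one_iff.1 this])

lemma exists_pos_le_norm_segMean_deriv (hγ : ContDiff ℝ 1 γ) (hper : Function.Periodic γ 1)
    (hinj : PerInjective γ) (hreg : RegularCurve γ) :
    ∃ m > 0, ∀ u w : ℝ, |w| ≤ 1 / 2 → m ≤ ‖segMean (deriv γ) u w‖ := by
  obtain ⟨p, hp, hmin⟩ := ((isCompact_Icc (a := (0 : ℝ)) (b := 1)).prod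
    (isCompact_Icc (a := -(1 / 2 : ℝ)) (b := 1 / 2))).exists_isMinOn
    ⟨(0, 0), by constructor <;> constructor <;> norm_num⟩
    (continuous_segMean (hγ.continuous_deriv le_rfl)).norm.continuousOn
  refine ⟨‖segMean (deriv γ) p.1 p.2‖, norm_pos_iff.2 (segMean_deriv_ne_zero hγ hinj hreg
    ((abs_le.2 hp.2).trans_lt (by norm_num))), fun u w hw => ?_⟩
  obtain ⟨v, hv, huv⟩ := (periodic_segMean (periodic_deriv hper) w).exists_mem_Ico₀ one_pos u
  rw [huv]
  exact isMinOn_iff.1 hmin (v, w) (mk_mem_prod (Ico_subset_Icc_self hv) (abs_le.1 hw))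

/-- The curves `γ + τ • h` with `|τ| ≤ r` are closed `C¹` curves with uniformly bounded velocities
and a common lower bound `c` for `|γ(u+w) - γ(u)| / |w|`, which at `w = 0` bounds the speed. -/
structure UniformVariation (γ h : ℝ → Rn n) (c M r : ℝ) : Prop where
  contDiff_left : ContDiff ℝ 1 γ
  contDiff_right : ContDiff ℝ 1 h
  periodic_left : Function.Periodic γ 1
  periodic_right : Function.Periodic h 1
  c_pos : 0 < c
  r_pos : 0 < r
  r_le_one : r ≤ 1
  norm_deriv_left_le : ∀ x, ‖deriv γ x‖ ≤ M
  norm_deriv_right_le : ∀ x, ‖deriv h x‖ ≤ M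
  le_norm_segMean : ∀ τ ∈ Icc (-r) r, ∀ u w : ℝ, |w| ≤ 1 / 2 →
    c ≤ ‖segMean (deriv (γ + τ • h)) u w‖

lemma exists_uniformVariation (hγ : ContDiff ℝ 1 γ) (hγp : Function.Periodic γ 1)
    (hinj : PerInjective γ) (hreg : RegularCurve γ) (hh : ContDiff ℝ 1 h)
    (hhp : Function.Periodic h 1) : ∃ c M r, UniformVariation γ h c M r := by
  have hγ' := hγ.continuous_deriv le_rfl
  have hh' := hh.continuous_deriv le_rfl
  obtain ⟨m, hm, le_mean⟩ := exists_pos_le_norm_segMean_deriv hγ hγp hinj hreg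
  obtain ⟨A, hA⟩ := exists_norm_le_of_periodic (periodic_deriv hγp) one_ne_zero hγ'
  obtain ⟨B, hB⟩ := exists_norm_le_of_periodic (periodic_deriv hhp) one_ne_zero hh'
  have hB0 : 0 ≤ B := (norm_nonneg _).trans (hB 0)
  have r_pos : 0 < min 1 (m / (2 * (B + 1))) := lt_min one_pos (by positivity)
  refine ⟨m / 2, max A B, _, hγ, hh, hγp, hhp, half_pos hm, r_pos, min_le_left _ _,
    fun x => (hA x).trans (le_max_left _ _), fun x => (hB x).trans (le_max_right _ _),
    fun τ hτ u w hw => ?_⟩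
  have perturbation : ‖τ • segMean (deriv h) u w‖ ≤ m / 2 := by
    rw [norm_smul, Real.norm_eq_abs]
    calc |τ| * ‖segMean (deriv h) u w‖ ≤ m / (2 * (B + 1)) * (B + 1) := by
          gcongr
          · exact (abs_le.2 hτ).trans (min_le_right _ _)
          · exact (norm_segMean_le hB u w).trans (by linarith)
      _ = m / 2 := by field_simp
  rw [deriv_add_smul hγ hh, segMean_add_smul hγ' hh']
  have := norm_le_add_norm_add (segMean (deriv γ) u w) (τ • segMean (deriv h) u w)
  linarith [le_mean u w hw]

end Curves

namespace UniformVariation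

variable {γ h : ℝ → Rn n} {c M r α τ u w : ℝ} (hv : UniformVariation γ h c M r)
include hv

lemma Icc_subset : Icc (-r) r ⊆ Icc (-1) 1 :=
  Icc_subset_Icc (neg_le_neg hv.r_le_one) hv.r_le_one

lemma continuous_deriv_left : Continuous (deriv γ) := hv.contDiff_left.continuous_deriv le_rfl

lemma continuous_deriv_right : Continuous (deriv h) := hv.contDiff_right.continuous_deriv le_rfl

lemma deriv_eq (τ : ℝ) : deriv (γ + τ • h) = deriv γ + τ • deriv h :=
  deriv_add_smul hv.contDiff_left hv.contDiff_right τ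

lemma contDiff (τ : ℝ) : ContDiff ℝ 1 (γ + τ • h) :=
  hv.contDiff_left.add (hv.contDiff_right.const_smul τ)

lemma continuous_deriv (τ : ℝ) : Continuous (deriv (γ + τ • h)) :=
  (hv.contDiff τ).continuous_deriv le_rfl

lemma periodic (τ : ℝ) : Function.Periodic (γ + τ • h) 1 :=
  hv.periodic_left.add (hv.periodic_right.smul τ)

lemma le_norm_deriv (hτ : τ ∈ Icc (-r) r) (x : ℝ) : c ≤ ‖deriv (γ + τ • h) x‖ := by
  simpa [segMean_zero_right] using hv.le_norm_segMean τ hτ x 0 (by norm_num)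

lemma M_pos : 0 < M := by
  refine hv.c_pos.trans_le (le_trans ?_ (hv.norm_deriv_left_le 0))
  simpa using hv.le_norm_deriv (τ := 0) ⟨by linarith [hv.r_pos], hv.r_pos.le⟩ 0

lemma bddLipOn_deriv (x : ℝ) :
    BddLipOn (fun τ : ℝ => deriv (γ + τ • h) x) (2 * M) (Icc (-r) r) :=
  ((BddLipOn.add_smul hv.Icc_subset _ _).congr fun τ _ => congrFun (hv.deriv_eq τ) x).mono
    (by linarith [hv.norm_deriv_left_le x, hv.norm_deriv_right_le x])

lemma bddLipOn_segMean_deriv (u w : ℝ) :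
    BddLipOn (fun τ : ℝ => segMean (deriv (γ + τ • h)) u w) (2 * M) (Icc (-r) r) :=
  (BddLipOn.segMean hv.continuous_deriv continuous_const hv.bddLipOn_deriv u w).mono
    (by simp [segMean])

lemma bddLipOn_meanSpeed (u w : ℝ) :
    BddLipOn (fun τ : ℝ => meanSpeed (γ + τ • h) u w) (2 * M) (Icc (-r) r) :=
  (BddLipOn.segMean (fun τ => (hv.continuous_deriv τ).norm) continuous_const
    (fun x => (hv.bddLipOn_deriv x).norm) u w).mono (by simp [segMean])

lemma bddLipOn_idist (hw : |w| ≤ 1 / 2) :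
    BddLipOn (fun τ : ℝ => idist (γ + τ • h) u w) (4 * M) (Icc (-r) r) := by
  have arc : BddLipOn (fun τ : ℝ => |w| * meanSpeed (γ + τ • h) u w) (2 * M) (Icc (-r) r) :=
    ((hv.bddLipOn_meanSpeed u w).const_mul |w|).mono
      (mul_le_of_le_one_left (by linarith [hv.M_pos]) (by rw [abs_abs]; linarith))
  simp only [idist_eq_min_meanSpeed]
  exact (arc.mono (by linarith [hv.M_pos])).min
    (((hv.bddLipOn_meanSpeed 0 1).sub arc).mono (by linarith))

lemma idist_eq_abs_mul_meanSpeed (hτ : τ ∈ Icc (-r) r) (hw : |w| ≤ c / (4 * M)) :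
    idist (γ + τ • h) u w = |w| * meanSpeed (γ + τ • h) u w := by
  have hM := hv.M_pos
  have hc := hv.c_pos
  have arc_le : |w| * meanSpeed (γ + τ • h) u w ≤ c / 2 := by
    have speed_le := (le_abs_self _).trans ((hv.bddLipOn_meanSpeed u w).norm_le τ hτ)
    calc |w| * meanSpeed (γ + τ • h) u w ≤ c / (4 * M) * (2 * M) := by
          gcongr
          exact segMean_nonneg (fun _ => norm_nonneg _) u w
      _ = c / 2 := by field_simp; norm_num
  have le_length : c ≤ meanSpeed (γ + τ • h) 0 1 := by
    simpa [segMean, meanSpeed] using segMean_mono (continuous_const (y := c))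
      (hv.continuous_deriv τ).norm (hv.le_norm_deriv hτ) 0 1
  rw [idist_eq_min_meanSpeed, min_eq_left (by linarith)]

lemma norm_segMean_le_idist_div (hw : |w| ≤ 1) (hw0 : w ≠ 0) (τ : ℝ) :
    ‖segMean (deriv (γ + τ • h)) u w‖ ≤ idist (γ + τ • h) u w / |w| := by
  have := norm_sub_le_idist (hv.contDiff τ) (hv.periodic τ) (u := u) hw
  rwa [le_div_iff₀ (abs_pos.2 hw0), mul_comm, ← Real.norm_eq_abs, ← norm_smul,
    ← sub_eq_smul_segMean (hv.contDiff τ)]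

lemma le_idist_div (hτ : τ ∈ Icc (-r) r) (hw : |w| ≤ 1 / 2) (hw0 : w ≠ 0) :
    c ≤ idist (γ + τ • h) u w / |w| :=
  (hv.le_norm_segMean τ hτ u w hw).trans
    (hv.norm_segMean_le_idist_div (by linarith) hw0 τ)

lemma exists_bddLipOn_idist_div_of_le : ∃ K, 0 ≤ K ∧ ∀ u w : ℝ, |w| ≤ c / (4 * M) → w ≠ 0 →
    BddLipOn (fun τ : ℝ => idist (γ + τ • h) u w / |w|) (2 * M) (Icc (-r) r) ∧
    BddLipOn (fun τ : ℝ => idist (γ + τ • h) u w / |w| - ‖segMean (deriv (γ + τ • h)) u w‖)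
      (K * (segOsc (deriv γ) u w + segOsc (deriv h) u w)) (Icc (-r) r) := by
  obtain ⟨K, hK, defect⟩ := exists_bddLipOn_segMean_norm_sub_norm_segMean (V := Rn n)
    hv.Icc_subset hv.c_pos hv.M_pos.le
  refine ⟨K, hK, fun u w hw hw0 => ?_⟩
  have idist_div_eq : EqOn (fun τ : ℝ => idist (γ + τ • h) u w / |w|)
      (fun τ : ℝ => meanSpeed (γ + τ • h) u w) (Icc (-r) r) := fun τ hτ => by
    simp only [hv.idist_eq_abs_mul_meanSpeed hτ hw, mul_div_cancel_left₀ _ (abs_ne_zero.2 hw0)]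
  refine ⟨(hv.bddLipOn_meanSpeed u w).congr idist_div_eq,
    (defect hv.continuous_deriv_left hv.continuous_deriv_right hv.norm_deriv_left_le
      hv.norm_deriv_right_le (u := u) (fun τ hτ => hv.deriv_eq τ ▸ hv.le_norm_deriv hτ u) w).congr
      fun τ hτ => ?_⟩
  simp only [← hv.deriv_eq]
  exact congrArg (· - ‖segMean (deriv (γ + τ • h)) u w‖) (idist_div_eq hτ)

lemma bddLipOn_idist_div_of_ge {δ : ℝ} (hδ : 0 < δ) (hδw : δ ≤ |w|) (hw : |w| ≤ 1 / 2) :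
    BddLipOn (fun τ : ℝ => idist (γ + τ • h) u w / |w|) (4 * M / δ) (Icc (-r) r) := by
  refine (((hv.bddLipOn_idist (u := u) hw).const_mul |w|⁻¹).congr
    fun τ _ => div_eq_inv_mul _ _).mono ?_
  rw [abs_inv, abs_abs, ← div_eq_inv_mul]
  have := hv.M_pos
  gcongr

/-- Close to the diagonal the intrinsic distance is the arc length; at a distance from it `|w| ^ α`
is bounded below. -/
lemma exists_bddLipOn_idist_div (hα : 0 ≤ α) : ∃ K, 0 ≤ K ∧ ∀ u w : ℝ, |w| ≤ 1 / 2 → w ≠ 0 →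
    BddLipOn (fun τ : ℝ => idist (γ + τ • h) u w / |w|) K (Icc (-r) r) ∧
    BddLipOn (fun τ : ℝ => idist (γ + τ • h) u w / |w| - ‖segMean (deriv (γ + τ • h)) u w‖)
      (K * (segOsc (deriv γ) u w + segOsc (deriv h) u w + |w| ^ α)) (Icc (-r) r) := by
  obtain ⟨K, hK, near⟩ := hv.exists_bddLipOn_idist_div_of_le
  have hM := hv.M_pos
  obtain ⟨δ, hδ, hδ_eq⟩ : ∃ δ, 0 < δ ∧ δ = c / (4 * M) := ⟨_, div_pos hv.c_pos (by linarith), rfl⟩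
  set A := 4 * M / δ + 2 * M
  have hA : 0 ≤ A := by positivity
  have hAδ : 0 ≤ A * δ ^ (-α) := by positivity
  refine ⟨K + A + A * δ ^ (-α), by positivity, fun u w hw hw0 => ?_⟩
  have osc_nonneg := add_nonneg (segOsc_nonneg (deriv γ) u w) (segOsc_nonneg (deriv h) u w)
  have rpow_nonneg : 0 ≤ |w| ^ α := by positivity
  rcases le_total |w| δ with hwδ | hδw
  · obtain ⟨bdd, defect⟩ := near u w (hδ_eq ▸ hwδ) hw0
    have : 0 ≤ 4 * M / δ := by positivity
    exact ⟨bdd.mono (by simp only [A] at hAδ ⊢; linarith), defect.mono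
      (mul_le_mul (by linarith) (by linarith) osc_nonneg (by positivity))⟩
  · have bdd := hv.bddLipOn_idist_div_of_ge (u := u) hδ hδw hw
    refine ⟨bdd.mono (by simp only [A] at hAδ ⊢; linarith),
      (bdd.sub (hv.bddLipOn_segMean_deriv u w).norm).mono ?_⟩
    have one_le : 1 ≤ δ ^ (-α) * |w| ^ α := by
      rw [Real.rpow_neg hδ.le, inv_mul_eq_div, one_le_div (by positivity)]
      gcongr
    calc A ≤ A * (δ ^ (-α) * |w| ^ α) := le_mul_of_one_le_right hA one_le
      _ = A * δ ^ (-α) * |w| ^ α := by ring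
      _ ≤ (K + A + A * δ ^ (-α)) * _ := by gcongr <;> linarith

end UniformVariation

section Integrand

variable {γ h : ℝ → Rn n} {α u w : ℝ}

lemma ohIntegrand_nonneg (hα : 0 ≤ α) (hpos : 0 < ‖γ (u + w) - γ u‖)
    (hle : ‖γ (u + w) - γ u‖ ≤ idist γ u w) : 0 ≤ ohIntegrand α γ u w := by
  refine mul_nonneg (mul_nonneg (sub_nonneg.2 ?_) (norm_nonneg _)) (norm_nonneg _)
  gcongr

lemma ohIntegrand_eq_rpow_mul (hγ : ContDiff ℝ 1 γ) (α : ℝ) (hw : w ≠ 0)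
    (hd : 0 ≤ idist γ u w / |w|) : ohIntegrand α γ u w = |w| ^ (-α) *
      ((‖segMean (deriv γ) u w‖ ^ (-α) - (idist γ u w / |w|) ^ (-α)) *
        (‖deriv γ (u + w)‖ * ‖deriv γ u‖)) := by
  have hw' : 0 < |w| := abs_pos.2 hw
  have one_div_rpow_abs_mul : ∀ x : ℝ, 0 ≤ x → 1 / (|w| * x) ^ α = |w| ^ (-α) * x ^ (-α) :=
    fun x hx => by rw [one_div, ← Real.rpow_neg (by positivity), Real.mul_rpow hw'.le hx]
  have chord := one_div_rpow_abs_mul _ (norm_nonneg (segMean (deriv γ) u w))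
  have arc := one_div_rpow_abs_mul _ hd
  rw [mul_div_cancel₀ _ hw'.ne'] at arc
  rw [ohIntegrand, sub_eq_smul_segMean hγ, norm_smul, Real.norm_eq_abs, chord, arc]
  ring

lemma ohIntegrand_add_neg (α : ℝ) (γ : ℝ → Rn n) (u w : ℝ) :
    ohIntegrand α γ (u + w) (-w) = ohIntegrand α γ u w := by
  rw [ohIntegrand, ohIntegrand, idist_add_neg, add_neg_cancel_right, norm_sub_rev]
  ring

lemma periodic_ohIntegrand {T : ℝ} (hγ : Function.Periodic γ T) (α w : ℝ) :
    Function.Periodic (fun u => ohIntegrand α γ u w) T := fun u => by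
  simp only [ohIntegrand, periodic_idist hγ w u, add_right_comm u T, hγ _, periodic_deriv hγ _]

lemma measurable_ohIntegrand (hγ : ContDiff ℝ 1 γ) (α : ℝ) :
    Measurable fun p : ℝ × ℝ => ohIntegrand α γ p.1 p.2 := by
  have arc := (continuous_idist hγ).measurable
  have hγc := hγ.continuous.measurable
  have := (hγ.continuous_deriv le_rfl).measurable
  unfold ohIntegrand
  fun_prop

/-- Up to a constant, a bound for the energy integrand and its Lipschitz constant along the
variation `γ + τ • h`. The term `|w| ^ α` accounts for pairs of points far from the diagonal. -/
def energyBound (α : ℝ) (γ h : ℝ → Rn n) (u w : ℝ) : ℝ :=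
  (segOsc (deriv γ) u w + segOsc (deriv h) u w + |w| ^ α) * |w| ^ (-α)

/-- The logarithmic derivative `⟨γ' / |γ'|², h'⟩` of the speed in the direction `h`. -/
def logSpeedVar (γ h : ℝ → Rn n) (u : ℝ) : ℝ := ⟪(‖deriv γ u‖ ^ 2)⁻¹ • deriv γ u, deriv h u⟫

/-- The derivative of `|γ(u+w) - γ(u)|^{-α} - d_γ(u+w,u)^{-α}` in the direction `h`, divided
by `-α`. -/
def potentialVar (α : ℝ) (γ h : ℝ → Rn n) (u w : ℝ) : ℝ :=
  ⟪γ (u + w) - γ u, h (u + w) - h u⟫ / ‖γ (u + w) - γ u‖ ^ (α + 2)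
    - deriv (fun τ : ℝ => idist (γ + τ • h) u w) 0 / idist γ u w ^ (α + 1)

/-- The derivative of the energy integrand in the direction `h`. -/
def ohVariation (α : ℝ) (γ h : ℝ → Rn n) (u w : ℝ) : ℝ :=
  ohIntegrand α γ u w * (logSpeedVar γ h (u + w) + logSpeedVar γ h u) -
    α * potentialVar α γ h u w * (‖deriv γ (u + w)‖ * ‖deriv γ u‖)

lemma continuous_logSpeedVar (hγ : ContDiff ℝ 1 γ) (hreg : RegularCurve γ)
    (hh : ContDiff ℝ 1 h) : Continuous (logSpeedVar γ h) := by
  have := hγ.continuous_deriv le_rfl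
  have := hh.continuous_deriv le_rfl
  have sq_ne_zero : ∀ u, ‖deriv γ u‖ ^ 2 ≠ 0 := fun u => pow_ne_zero 2 (norm_ne_zero_iff.2 (hreg u))
  unfold logSpeedVar
  fun_prop (disch := exact sq_ne_zero _)

lemma periodic_logSpeedVar {T : ℝ} (hγ : Function.Periodic γ T) (hh : Function.Periodic h T) :
    Function.Periodic (logSpeedVar γ h) T := fun u => by
  simp only [logSpeedVar, periodic_deriv hγ u, periodic_deriv hh u]

lemma hasDerivAt_norm_add_smul {V : Type*} [NormedAddCommGroup V] [InnerProductSpace ℝ V] {a : V}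
    (ha : a ≠ 0) (k : V) : HasDerivAt (fun τ : ℝ => ‖a + τ • k‖) (⟪a, k⟫ / ‖a‖) 0 := by
  have segment : HasDerivAt (fun τ : ℝ => a + τ • k) k 0 := by
    simpa using ((hasDerivAt_id (0 : ℝ)).smul_const k).const_add a
  have sqrt_sq := segment.norm_sq.sqrt (by simpa using ha)
  simp only [Real.sqrt_sq (norm_nonneg _), zero_smul, add_zero] at sqrt_sq
  exact sqrt_sq.congr_deriv (mul_div_mul_left _ _ two_ne_zero)

lemma hasDerivAt_norm_deriv_add_smul (hγ : ContDiff ℝ 1 γ) (hh : ContDiff ℝ 1 h) {x : ℝ}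
    (hx : deriv γ x ≠ 0) : HasDerivAt (fun τ : ℝ => ‖deriv (γ + τ • h) x‖)
      (logSpeedVar γ h x * ‖deriv γ x‖) 0 := by
  simp only [deriv_add_smul hγ hh, Pi.add_apply, Pi.smul_apply]
  refine (hasDerivAt_norm_add_smul hx (deriv h x)).congr_deriv ?_
  rw [logSpeedVar, real_inner_smul_left]
  field_simp

lemma differentiableAt_min_of_ne {E : Type*} [NormedAddCommGroup E] [NormedSpace ℝ E]
    {f g : E → ℝ} {x : E} (hf : DifferentiableAt ℝ f x) (hg : DifferentiableAt ℝ g x)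
    (hne : f x ≠ g x) : DifferentiableAt ℝ (fun t => min (f t) (g t)) x := by
  rcases hne.lt_or_gt with hlt | hlt
  · refine hf.congr_of_eventuallyEq ?_
    filter_upwards [hf.continuousAt.eventually_lt hg.continuousAt hlt] with t ht
    exact min_eq_left ht.le
  · refine hg.congr_of_eventuallyEq ?_
    filter_upwards [hg.continuousAt.eventually_lt hf.continuousAt hlt] with t ht
    exact min_eq_right ht.le

lemma hasDerivAt_one_div_rpow {f : ℝ → ℝ} {f' x : ℝ} (hf : HasDerivAt f f' x) (hx : 0 < f x)
    (α : ℝ) : HasDerivAt (fun t => 1 / f t ^ α) (-α * (f' / f x ^ (α + 1))) x := by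
  refine ((hf.rpow_const (p := -α) (.inl hx.ne')).congr_deriv ?_).congr_of_eventuallyEq ?_
  · rw [show -α - 1 = -(α + 1) by ring, Real.rpow_neg hx.le]
    ring
  · filter_upwards [hf.continuousAt.eventually (lt_mem_nhds hx)] with t ht
    rw [Real.rpow_neg ht.le, one_div]

lemma hasDerivAt_ohIntegrand (hγ : ContDiff ℝ 1 γ) (hh : ContDiff ℝ 1 h)
    (hreg : RegularCurve γ) (hne : γ (u + w) - γ u ≠ 0) (hpos : 0 < idist γ u w)
    (hdiff : DifferentiableAt ℝ (fun τ : ℝ => idist (γ + τ • h) u w) 0) (α : ℝ) :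
    HasDerivAt (fun τ : ℝ => ohIntegrand α (γ + τ • h) u w) (ohVariation α γ h u w) 0 := by
  have zero_variation : γ + (0 : ℝ) • h = γ := by simp
  have chord : HasDerivAt (fun τ : ℝ => ‖(γ + τ • h) (u + w) - (γ + τ • h) u‖)
      (⟪γ (u + w) - γ u, h (u + w) - h u⟫ / ‖γ (u + w) - γ u‖) 0 := by
    refine (hasDerivAt_norm_add_smul hne (h (u + w) - h u)).congr_of_eventuallyEq
      (.of_forall fun τ => congrArg norm ?_)
    simp only [Pi.add_apply, Pi.smul_apply, smul_sub]
    abel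
  have chord_pow := hasDerivAt_one_div_rpow chord (by simpa [zero_variation] using hne) α
  have arc_pow := hasDerivAt_one_div_rpow hdiff.hasDerivAt (by rwa [zero_variation]) α
  have speed := fun x => hasDerivAt_norm_deriv_add_smul hγ hh (hreg x)
  refine (((chord_pow.sub arc_pow).mul (speed (u + w))).mul (speed u)).congr_deriv ?_
  have chord_pos : 0 < ‖γ (u + w) - γ u‖ := norm_pos_iff.2 hne
  simp only [zero_variation, Pi.sub_apply, Pi.mul_apply]
  rw [ohVariation, ohIntegrand, potentialVar, show α + 2 = α + 1 + 1 by ring,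
    Real.rpow_add_one chord_pos.ne' (α + 1)]
  field_simp
  ring

end Integrand

lemma BddLipOn.lipschitzOnWith {T E : Type*} [PseudoMetricSpace T] [SeminormedAddCommGroup E]
    {f : T → E} {B : ℝ} {S : Set T} (hf : BddLipOn f B S) :
    LipschitzOnWith (Real.nnabs B) f S :=
  .of_dist_le_mul fun τ₁ h₁ τ₂ h₂ => by
    rw [dist_eq_norm, Real.coe_nnabs]
    exact (hf.norm_sub_le τ₁ h₁ τ₂ h₂).trans (by gcongr; exact le_abs_self B)

namespace UniformVariation

variable {γ h : ℝ → Rn n} {c M r α τ u w : ℝ} (hv : UniformVariation γ h c M r)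
include hv

lemma Icc_mem_nhds : Icc (-r) r ∈ 𝓝 (0 : ℝ) :=
  _root_.Icc_mem_nhds (neg_neg_iff_pos.2 hv.r_pos) hv.r_pos

lemma zero_mem_Icc : (0 : ℝ) ∈ Icc (-r) r := mem_of_mem_nhds hv.Icc_mem_nhds

lemma regularCurve : RegularCurve γ := fun x => norm_pos_iff.1 <|
  hv.c_pos.trans_le (by simpa using hv.le_norm_deriv hv.zero_mem_Icc x)

lemma norm_sub_pos (hτ : τ ∈ Icc (-r) r) (hw : |w| ≤ 1 / 2) (hw0 : w ≠ 0) :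
    0 < ‖(γ + τ • h) (u + w) - (γ + τ • h) u‖ := by
  rw [sub_eq_smul_segMean (hv.contDiff τ), norm_smul]
  exact mul_pos (norm_pos_iff.2 hw0) (hv.c_pos.trans_le (hv.le_norm_segMean τ hτ u w hw))

lemma ohIntegrand_nonneg (hα : 0 ≤ α) (hτ : τ ∈ Icc (-r) r) (hw : |w| ≤ 1 / 2) (hw0 : w ≠ 0) :
    0 ≤ ohIntegrand α (γ + τ • h) u w :=
  _root_.ohIntegrand_nonneg hα (hv.norm_sub_pos hτ hw hw0)
    (norm_sub_le_idist (hv.contDiff τ) (hv.periodic τ) (by linarith))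

lemma exists_bddLipOn_ohIntegrand (hα : 0 ≤ α) : ∃ K, ∀ u w : ℝ, |w| ≤ 1 / 2 → w ≠ 0 →
    BddLipOn (fun τ : ℝ => ohIntegrand α (γ + τ • h) u w) (K * energyBound α γ h u w)
      (Icc (-r) r) := by
  obtain ⟨K, hK, bddLip_arc⟩ := hv.exists_bddLipOn_idist_div hα
  have hM := hv.M_pos
  have hc := hv.c_pos
  set A := K + 2 * M
  set D := 2 * α * (c ^ (-(α + 1)) + (α + 1) * c ^ (-(α + 1 + 1)) * A)
  refine ⟨2 * (D * K * (2 * (2 * M * (2 * M)))), fun u w hw hw0 => ?_⟩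
  obtain ⟨arc, defect⟩ := bddLip_arc u w hw hw0
  have potential := BddLipOn.rpow_neg_sub_rpow_neg hc hα
    ((hv.bddLipOn_segMean_deriv u w).norm.mono (by linarith : 2 * M ≤ A))
    (arc.mono (by linarith)) defect (fun τ hτ => hv.le_norm_segMean τ hτ u w hw)
    fun τ hτ => hv.le_idist_div hτ hw hw0
  have speeds := (hv.bddLipOn_deriv (u + w)).norm.mul (hv.bddLipOn_deriv u).norm
  refine (((potential.mul speeds).const_mul (|w| ^ (-α))).congr fun τ hτ =>
    ohIntegrand_eq_rpow_mul (hv.contDiff τ) α hw0 (hc.le.trans (hv.le_idist_div hτ hw hw0))).mono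
    (le_of_eq ?_)
  rw [abs_of_nonneg (by positivity), energyBound]
  ring

lemma differentiableAt_meanSpeed (u w : ℝ) :
    DifferentiableAt ℝ (fun τ : ℝ => meanSpeed (γ + τ • h) u w) 0 := by
  have speed_deriv := fun x =>
    hasDerivAt_norm_deriv_add_smul hv.contDiff_left hv.contDiff_right (hv.regularCurve x)
  have cont_logSpeed := continuous_logSpeedVar hv.contDiff_left hv.regularCurve hv.contDiff_right
  have cont_speed := fun τ => (hv.continuous_deriv τ).norm
  have := hv.continuous_deriv_left
  exact (intervalIntegral.hasDerivAt_integral_of_dominated_loc_of_lip (μ := volume)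
    (F := fun τ x => ‖deriv (γ + τ • h) (u + x * w)‖) (bound := fun _ => 2 * M)
    hv.Icc_mem_nhds (.of_forall fun τ => (Continuous.comp (cont_speed τ)
      (by fun_prop : Continuous fun x : ℝ => u + x * w)).aestronglyMeasurable)
    (((cont_speed 0).comp (by fun_prop)).intervalIntegrable _ _)
    (Continuous.aestronglyMeasurable (by fun_prop))
    (.of_forall fun x _ => (hv.bddLipOn_deriv _).norm.lipschitzOnWith) (by simp)
    (.of_forall fun x _ => speed_deriv (u + x * w))).2.differentiableAt

lemma differentiableAt_idist (hne : arcLen γ u w ≠ curveLen γ - arcLen γ u w) :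
    DifferentiableAt ℝ (fun τ : ℝ => idist (γ + τ • h) u w) 0 := by
  simp only [idist_eq_min_meanSpeed]
  refine differentiableAt_min_of_ne ((hv.differentiableAt_meanSpeed u w).const_mul _)
    ((hv.differentiableAt_meanSpeed 0 1).sub ((hv.differentiableAt_meanSpeed u w).const_mul _)) ?_
  simpa [arcLen_eq_abs_mul_meanSpeed, curveLen_eq_meanSpeed] using hne

lemma hasDerivAt_ohIntegrand (hw : |w| ≤ 1 / 2) (hw0 : w ≠ 0)
    (hne : arcLen γ u w ≠ curveLen γ - arcLen γ u w) (α : ℝ) :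
    HasDerivAt (fun τ : ℝ => ohIntegrand α (γ + τ • h) u w) (ohVariation α γ h u w) 0 := by
  have chord_pos : 0 < ‖γ (u + w) - γ u‖ := by
    simpa using hv.norm_sub_pos hv.zero_mem_Icc hw hw0 (u := u)
  exact _root_.hasDerivAt_ohIntegrand hv.contDiff_left hv.contDiff_right hv.regularCurve
    (norm_pos_iff.1 chord_pos)
    (chord_pos.trans_le (norm_sub_le_idist hv.contDiff_left hv.periodic_left (by linarith)))
    (hv.differentiableAt_idist hne) α

end UniformVariation

section PairMeasure

/-- Lebesgue measure on `(0, 1] × (-1/2, 1/2)`, the domain of integration of the energy. -/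
def pairMeasure : Measure (ℝ × ℝ) :=
  (volume.restrict (Ioc (0 : ℝ) 1)).prod (volume.restrict (Ioo (-(1 : ℝ) / 2) (1 / 2)))

instance : IsFiniteMeasure pairMeasure := by unfold pairMeasure; infer_instance

lemma ae_pairMeasure_snd : ∀ᵐ p ∂pairMeasure, |p.2| ≤ 1 / 2 ∧ p.2 ≠ 0 := by
  refine Measure.quasiMeasurePreserving_snd.ae (p := fun w : ℝ => |w| ≤ 1 / 2 ∧ w ≠ 0) ?_
  filter_upwards [ae_restrict_mem measurableSet_Ioo, Measure.ae_ne _ (0 : ℝ)] with w hw hw0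
  exact ⟨abs_le.2 ⟨by linarith [hw.1], hw.2.le⟩, hw0⟩

lemma lintegral_eq_ofReal_abs_mul_lintegral_comp_mul {g : ℝ → ℝ≥0∞} (hg : Measurable g) {a : ℝ}
    (ha : a ≠ 0) : ∫⁻ z, g z = ENNReal.ofReal |a| * ∫⁻ w, g (a * w) := by
  conv_lhs => rw [← Real.smul_map_volume_mul_left ha]
  rw [lintegral_smul_measure, lintegral_map hg (measurable_const_mul a), smul_eq_mul]

/-- Substituting `z = x * w` produces the factor `x ^ (α - 1)`. -/
lemma lintegral_comp_mul_mul_rpow_neg_le {g : ℝ → ℝ} (hg : Measurable g) (α : ℝ)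
    {x : ℝ} (hx : x ∈ Ioc (0 : ℝ) 1) :
    ∫⁻ w in Ioo (-(1 : ℝ) / 2) (1 / 2), ENNReal.ofReal (g (x * w) * |w| ^ (-α)) ≤
      ENNReal.ofReal (x ^ (α - 1)) *
        ∫⁻ w in Ioo (-(1 : ℝ) / 2) (1 / 2), ENNReal.ofReal (g w / |w| ^ α) := by
  have meas : Measurable fun w : ℝ => ENNReal.ofReal (g w / |w| ^ α) := by fun_prop
  rw [← lintegral_indicator (μ := volume) measurableSet_Ioo
      (f := fun w : ℝ => ENNReal.ofReal (g w / |w| ^ α)),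
    lintegral_eq_ofReal_abs_mul_lintegral_comp_mul (meas.indicator measurableSet_Ioo) hx.1.ne',
    ← mul_assoc, ← lintegral_const_mul' _ _ (by finiteness)]
  refine (setLIntegral_mono' measurableSet_Ioo fun w hw => ?_).trans (setLIntegral_le_lintegral _ _)
  have mem_Ioo : x * w ∈ Ioo (-(1 : ℝ) / 2) (1 / 2) := by
    have : |x * w| < 1 / 2 := by
      rw [abs_mul, abs_of_pos hx.1]
      exact (mul_le_of_le_one_left (abs_nonneg _) hx.2).trans_lt
        (abs_lt.2 ⟨by linarith [hw.1], hw.2⟩)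
    exact ⟨by linarith [(abs_lt.1 this).1], (abs_lt.1 this).2⟩
  have rpow_pos : 0 < x ^ α := Real.rpow_pos_of_pos hx.1 α
  rw [indicator_of_mem mem_Ioo, abs_of_pos hx.1, ← ENNReal.ofReal_mul (by positivity [hx.1]),
    ← ENNReal.ofReal_mul (by positivity [hx.1])]
  refine ENNReal.ofReal_le_ofReal (le_of_eq ?_)
  rw [abs_mul, abs_of_pos hx.1, Real.mul_rpow hx.1.le (abs_nonneg w), Real.rpow_neg (abs_nonneg w),
    Real.rpow_sub_one hx.1.ne']
  field_simp [hx.1.ne']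

lemma ofReal_segOsc_mul {E : Type*} [NormedAddCommGroup E] {P : ℝ → E} (hP : Continuous P)
    (u w : ℝ) {c : ℝ} (hc : 0 ≤ c) : ENNReal.ofReal (segOsc P u w * c) =
      ∫⁻ x in Ioc (0 : ℝ) 1, ENNReal.ofReal (‖P (u + x * w) - P u‖ ^ 2 * c) := by
  rw [segOsc, segMean, ← intervalIntegral.integral_mul_const,
    intervalIntegral.integral_of_le zero_le_one, ofReal_integral_eq_lintegral_ofReal]
  · exact (intervalIntegrable_iff_integrableOn_Ioc_of_le zero_le_one).1
      (Continuous.intervalIntegrable (by fun_prop) _ _)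
  · exact .of_forall fun x => by positivity

lemma lintegral_segOsc_mul_rpow_neg_le {E : Type*} [NormedAddCommGroup E] {P : ℝ → E}
    (hP : Continuous P) (α u : ℝ) :
    ∫⁻ w in Ioo (-(1 : ℝ) / 2) (1 / 2), ENNReal.ofReal (segOsc P u w * |w| ^ (-α)) ≤
      (∫⁻ x in Ioc (0 : ℝ) 1, ENNReal.ofReal (x ^ (α - 1))) *
        ∫⁻ w in Ioo (-(1 : ℝ) / 2) (1 / 2), ENNReal.ofReal (‖P (u + w) - P u‖ ^ 2 / |w| ^ α) := by
  simp only [fun w : ℝ => ofReal_segOsc_mul hP u w (show 0 ≤ |w| ^ (-α) by positivity)]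
  rw [lintegral_lintegral_swap (Measurable.aemeasurable ?_), ← lintegral_mul_const _ (by fun_prop)]
  · exact setLIntegral_mono' measurableSet_Ioc fun x hx => lintegral_comp_mul_mul_rpow_neg_le
      (g := fun z => ‖P (u + z) - P u‖ ^ 2) (Continuous.measurable (by fun_prop)) α hx
  · have : Measurable fun p : ℝ × ℝ => ‖P (u + p.2 * p.1) - P u‖ ^ 2 :=
      Continuous.measurable (by fun_prop)
    exact (this.mul (measurable_fst.norm.pow_const _)).ennreal_ofReal

lemma integrable_segOsc_mul_rpow_neg {E : Type*} [NormedAddCommGroup E] {P : ℝ → E}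
    (hP : Continuous P) {α : ℝ} (hα : 0 < α) (hfin : gagliardoSq ((α - 1) / 2) P < ⊤) :
    Integrable (fun p : ℝ × ℝ => segOsc P p.1 p.2 * |p.2| ^ (-α)) pairMeasure := by
  have meas : Measurable fun p : ℝ × ℝ => segOsc P p.1 p.2 * |p.2| ^ (-α) :=
    (continuous_segOsc hP).measurable.mul (measurable_snd.norm.pow_const _)
  have dilation_finite : ∫⁻ x in Ioc (0 : ℝ) 1, ENNReal.ofReal (x ^ (α - 1)) < ⊤ :=
    ((intervalIntegrable_iff_integrableOn_Ioc_of_le zero_le_one).1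
      (intervalIntegral.intervalIntegrable_rpow' (by linarith))).lintegral_lt_top
  refine ⟨meas.aestronglyMeasurable, ?_⟩
  rw [hasFiniteIntegral_iff_ofReal (.of_forall fun p =>
    mul_nonneg (segOsc_nonneg _ _ _) (by positivity)), pairMeasure,
    lintegral_prod _ meas.ennreal_ofReal.aemeasurable]
  calc _ ≤ _ := lintegral_mono fun u => lintegral_segOsc_mul_rpow_neg_le hP α u
    _ = _ * gagliardoSq ((α - 1) / 2) P := by
        rw [lintegral_const_mul' _ _ dilation_finite.ne, gagliardoSq,
          show 1 + 2 * ((α - 1) / 2) = α by ring]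
    _ < ⊤ := ENNReal.mul_lt_top dilation_finite hfin

lemma integrable_energyBound {γ h : ℝ → Rn n} {α : ℝ} (hα : 0 < α)
    (hγ : MemH1 ((α - 1) / 2) γ) (hh : MemH1 ((α - 1) / 2) h) :
    Integrable (fun p : ℝ × ℝ => energyBound α γ h p.1 p.2) pairMeasure := by
  have far : Integrable (fun p : ℝ × ℝ => |p.2| ^ α * |p.2| ^ (-α)) pairMeasure := by
    refine Integrable.of_bound (C := 1) (Measurable.aestronglyMeasurable
      ((measurable_snd.norm.pow_const _).mul (measurable_snd.norm.pow_const _)))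
      (.of_forall fun p => ?_)
    rw [Real.rpow_neg (abs_nonneg _), ← div_eq_mul_inv,
      Real.norm_of_nonneg (div_nonneg (by positivity) (by positivity))]
    exact div_self_le_one _
  simp only [energyBound, add_mul]
  exact ((integrable_segOsc_mul_rpow_neg (hγ.2.1.continuous_deriv le_rfl) hα hγ.2.2).add
    (integrable_segOsc_mul_rpow_neg (hh.2.1.continuous_deriv le_rfl) hα hh.2.2)).add far

lemma strictMono_integral_norm_deriv {γ : ℝ → Rn n} (hγ : ContDiff ℝ 1 γ) (hreg : RegularCurve γ)
    (u : ℝ) : StrictMono fun w => ∫ θ in u..(u + w), ‖deriv γ θ‖ := fun a b hab => by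
  have speed_cont := (hγ.continuous_deriv le_rfl).norm
  have arc_pos : 0 < ∫ θ in (u + a)..(u + b), ‖deriv γ θ‖ :=
    intervalIntegral.intervalIntegral_pos_of_pos (speed_cont.intervalIntegrable _ _)
      (fun x => norm_pos_iff.2 (hreg x)) (by linarith)
  rwa [← intervalIntegral.integral_interval_sub_left (speed_cont.intervalIntegrable _ _)
    (speed_cont.intervalIntegrable _ _), sub_pos] at arc_pos

/-- For fixed `u` at most two `w` give an arc of half the total length. -/
lemma ae_arcLen_ne {γ : ℝ → Rn n} (hγ : ContDiff ℝ 1 γ) (hreg : RegularCurve γ) :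
    ∀ᵐ p ∂pairMeasure, arcLen γ p.1 p.2 ≠ curveLen γ - arcLen γ p.1 p.2 := by
  have arcLen_cont : Continuous fun p : ℝ × ℝ => arcLen γ p.1 p.2 := by
    have := continuous_meanSpeed hγ
    simp only [arcLen_eq_abs_mul_meanSpeed]
    fun_prop
  have closed : IsClosed {p : ℝ × ℝ | arcLen γ p.1 p.2 = curveLen γ - arcLen γ p.1 p.2} :=
    isClosed_eq arcLen_cont (by fun_prop)
  rw [ae_iff]
  simp only [ne_eq, not_not]
  rw [pairMeasure, Measure.measure_prod_null closed.measurableSet]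
  refine .of_forall fun u => Set.Countable.measure_zero ?_ _
  have injective := (strictMono_integral_norm_deriv hγ hreg u).injective
  refine ((toFinite {curveLen γ / 2, -(curveLen γ / 2)}).countable.preimage injective).mono
    fun w hw => eq_or_eq_neg_of_abs_eq ?_
  change arcLen γ u w = _ at hw
  change arcLen γ u w = _
  linarith

end PairMeasure

section PrincipalValue

lemma integral_pairMeasure_comp_add_neg {X : ℝ → ℝ → ℝ}
    (hper : ∀ w, Function.Periodic (fun u => X u w) 1)
    (hX : Integrable (fun p : ℝ × ℝ => X p.1 p.2) pairMeasure)
    (hX' : Integrable (fun p : ℝ × ℝ => X (p.1 + p.2) (-p.2)) pairMeasure) :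
    ∫ p, X (p.1 + p.2) (-p.2) ∂pairMeasure = ∫ p, X p.1 p.2 ∂pairMeasure := by
  rw [pairMeasure] at hX hX' ⊢
  rw [integral_prod_symm _ hX, integral_prod_symm _ hX']
  have shift : ∀ w, ∫ u in Ioc (0 : ℝ) 1, X (u + w) (-w) = ∫ u in Ioc (0 : ℝ) 1, X u (-w) :=
    fun w => by
      rw [← intervalIntegral.integral_of_le zero_le_one,
        ← intervalIntegral.integral_of_le zero_le_one,
        intervalIntegral.integral_comp_add_right (fun u => X u (-w)), add_comm 1 w, zero_add]
      simpa using (hper (-w)).intervalIntegral_add_eq w 0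
  simp only [shift]
  rw [← integral_Ioc_eq_integral_Ioo, ← integral_Ioc_eq_integral_Ioo,
    ← intervalIntegral.integral_of_le (by norm_num),
    ← intervalIntegral.integral_of_le (by norm_num),
    intervalIntegral.integral_comp_neg (fun w => ∫ u in Ioc (0 : ℝ) 1, X u w)]
  norm_num

lemma Ioo_inter_ae_eq_Wset {ε : ℝ} (hε : 0 < ε) :
    (Ioo (-(1 : ℝ) / 2) (1 / 2) ∩ {w | ε ≤ |w|} : Set ℝ) =ᵐ[volume] Wset ε := by
  filter_upwards [Measure.ae_ne volume (1 / 2 : ℝ), Measure.ae_ne volume (-(1 : ℝ) / 2)]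
    with w ne_right ne_left
  refine propext ⟨fun ⟨hw, hwε⟩ => ?_, fun hw => ?_⟩
  · rcases le_abs'.1 (show ε ≤ |w| from hwε) with le_neg | ge
    · exact .inl ⟨hw.1.le, le_neg⟩
    · exact .inr ⟨ge, hw.2.le⟩
  · rcases hw with hw | hw
    · exact ⟨⟨hw.1.lt_of_ne' ne_left, by linarith [hw.2]⟩, le_abs'.2 (.inl hw.2)⟩
    · exact ⟨⟨by linarith [hw.1], hw.2.lt_of_ne ne_right⟩, le_abs'.2 (.inr hw.1)⟩

lemma measurableSet_le_abs_snd (ε : ℝ) : MeasurableSet {p : ℝ × ℝ | ε ≤ |p.2|} :=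
  measurableSet_le measurable_const measurable_snd.norm

lemma integral_Wset_eq_integral_indicator {S : ℝ → ℝ → ℝ}
    (hS : Integrable (fun p : ℝ × ℝ => S p.1 p.2) pairMeasure) {ε : ℝ} (hε : 0 < ε) :
    ∫ u in Ioc (0 : ℝ) 1, ∫ w in Wset ε, S u w =
      ∫ p, {p : ℝ × ℝ | ε ≤ |p.2|}.indicator (fun p => S p.1 p.2) p ∂pairMeasure := by
  have integrable := hS.indicator (measurableSet_le_abs_snd ε)
  rw [pairMeasure] at integrable ⊢
  rw [integral_prod _ integrable]
  refine integral_congr_ae (.of_forall fun u => ?_)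
  change _ = ∫ w in Ioo (-(1 : ℝ) / 2) (1 / 2), {w : ℝ | ε ≤ |w|}.indicator (S u) w
  have measurable_le_abs : MeasurableSet {w : ℝ | ε ≤ |w|} :=
    measurableSet_le measurable_const measurable_id.norm
  rw [setIntegral_indicator measurable_le_abs, setIntegral_congr_set (Ioo_inter_ae_eq_Wset hε)]

lemma tendsto_integral_Wset {S : ℝ → ℝ → ℝ}
    (hS : Integrable (fun p : ℝ × ℝ => S p.1 p.2) pairMeasure) :
    Tendsto (fun ε : ℝ => ∫ u in Ioc (0 : ℝ) 1, ∫ w in Wset ε, S u w) (𝓝[>] (0 : ℝ))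
      (𝓝 (∫ p, S p.1 p.2 ∂pairMeasure)) := by
  refine (tendsto_integral_filter_of_dominated_convergence (fun p : ℝ × ℝ => ‖S p.1 p.2‖)
    (.of_forall fun ε => (hS.indicator (measurableSet_le_abs_snd ε)).aestronglyMeasurable)
    (.of_forall fun ε => .of_forall fun p => norm_indicator_le_norm_self _ _) hS.norm
    ?_).congr' ?_
  · filter_upwards [ae_pairMeasure_snd] with p hp
    refine tendsto_const_nhds.congr' ?_
    filter_upwards [nhdsWithin_le_nhds (Iio_mem_nhds (abs_pos.2 hp.2))] with ε hε
    have mem : p ∈ {p : ℝ × ℝ | ε ≤ |p.2|} := (mem_Iio.1 hε).le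
    exact (indicator_of_mem mem fun p : ℝ × ℝ => S p.1 p.2).symm
  · filter_upwards [self_mem_nhdsWithin] with ε hε
    exact (integral_Wset_eq_integral_indicator hS hε).symm

end PrincipalValue

section FirstVariation

variable {γ h : ℝ → Rn n} {c M r α : ℝ}

lemma oharaER_eq_integral (hγ : ContDiff ℝ 1 γ)
    (h0 : ∀ᵐ p ∂pairMeasure, 0 ≤ ohIntegrand α γ p.1 p.2) :
    oharaER α γ = ∫ p, ohIntegrand α γ p.1 p.2 ∂pairMeasure := by
  have meas := measurable_ohIntegrand hγ α
  rw [integral_eq_lintegral_of_nonneg_ae h0 meas.aestronglyMeasurable, pairMeasure,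
    lintegral_prod _ meas.ennreal_ofReal.aemeasurable]
  rfl

namespace UniformVariation

variable (hv : UniformVariation γ h c M r)
include hv

lemma aestronglyMeasurable_ohIntegrand (α τ : ℝ) : AEStronglyMeasurable
    (fun p : ℝ × ℝ => ohIntegrand α (γ + τ • h) p.1 p.2) pairMeasure :=
  (measurable_ohIntegrand (hv.contDiff τ) α).aestronglyMeasurable

lemma oharaER_eq_integral {τ : ℝ} (hα : 0 ≤ α) (hτ : τ ∈ Icc (-r) r) :
    oharaER α (γ + τ • h) = ∫ p, ohIntegrand α (γ + τ • h) p.1 p.2 ∂pairMeasure := by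
  refine _root_.oharaER_eq_integral (hv.contDiff τ) ?_
  filter_upwards [ae_pairMeasure_snd] with p hp using hv.ohIntegrand_nonneg hα hτ hp.1 hp.2

lemma ae_hasDerivAt_ohIntegrand (α : ℝ) : ∀ᵐ p ∂pairMeasure,
    HasDerivAt (fun τ : ℝ => ohIntegrand α (γ + τ • h) p.1 p.2) (ohVariation α γ h p.1 p.2) 0 := by
  filter_upwards [ae_pairMeasure_snd, ae_arcLen_ne hv.contDiff_left hv.regularCurve] with p hp hne
  exact hv.hasDerivAt_ohIntegrand hp.1 hp.2 hne α

lemma aestronglyMeasurable_ohVariation (α : ℝ) : AEStronglyMeasurable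
    (fun p : ℝ × ℝ => ohVariation α γ h p.1 p.2) pairMeasure := by
  refine aestronglyMeasurable_of_tendsto_ae (𝓝[≠] (0 : ℝ))
    (f := fun τ p => τ⁻¹ • (ohIntegrand α (γ + (0 + τ) • h) p.1 p.2 -
      ohIntegrand α (γ + (0 : ℝ) • h) p.1 p.2))
    (fun τ => ((hv.aestronglyMeasurable_ohIntegrand α (0 + τ)).sub
      (hv.aestronglyMeasurable_ohIntegrand α 0)).const_smul τ⁻¹) ?_
  filter_upwards [hv.ae_hasDerivAt_ohIntegrand α] with p hp using hp.tendsto_slope_zero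

variable (hα : 0 ≤ α)
  (hbound : Integrable (fun p : ℝ × ℝ => energyBound α γ h p.1 p.2) pairMeasure)
include hα hbound

lemma integrable_ohIntegrand :
    Integrable (fun p : ℝ × ℝ => ohIntegrand α γ p.1 p.2) pairMeasure := by
  obtain ⟨K, bddLip⟩ := hv.exists_bddLipOn_ohIntegrand hα
  have meas := hv.aestronglyMeasurable_ohIntegrand α 0
  simp only [zero_smul, add_zero] at meas
  refine (hbound.const_mul K).mono' meas ?_
  filter_upwards [ae_pairMeasure_snd] with p hp
  simpa using (bddLip p.1 p.2 hp.1 hp.2).norm_le 0 hv.zero_mem_Icc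

lemma hasDerivAt_integral_ohIntegrand :
    Integrable (fun p : ℝ × ℝ => ohVariation α γ h p.1 p.2) pairMeasure ∧
    HasDerivAt (fun τ : ℝ => ∫ p, ohIntegrand α (γ + τ • h) p.1 p.2 ∂pairMeasure)
      (∫ p, ohVariation α γ h p.1 p.2 ∂pairMeasure) 0 := by
  obtain ⟨K, bddLip⟩ := hv.exists_bddLipOn_ohIntegrand hα
  refine hasDerivAt_integral_of_dominated_loc_of_lip
    (F := fun (τ : ℝ) (p : ℝ × ℝ) => ohIntegrand α (γ + τ • h) p.1 p.2)
    hv.Icc_mem_nhds (.of_forall (hv.aestronglyMeasurable_ohIntegrand α))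
    (by simpa using hv.integrable_ohIntegrand hα hbound) (hv.aestronglyMeasurable_ohVariation α)
    ?_ (hbound.const_mul K) (hv.ae_hasDerivAt_ohIntegrand α)
  filter_upwards [ae_pairMeasure_snd] with p hp
  exact (bddLip p.1 p.2 hp.1 hp.2).lipschitzOnWith

lemma hasDirDeriv_oharaER :
    HasDirDeriv (oharaER α) γ h (∫ p, ohVariation α γ h p.1 p.2 ∂pairMeasure) := by
  refine (hv.hasDerivAt_integral_ohIntegrand hα hbound).2.tendsto_slope_zero.congr' ?_
  filter_upwards [nhdsWithin_le_nhds hv.Icc_mem_nhds] with τ hτ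
  rw [zero_add, ← hv.oharaER_eq_integral hα hτ, ← hv.oharaER_eq_integral hα hv.zero_mem_Icc,
    zero_smul, add_zero, smul_eq_mul, inv_mul_eq_div]

end UniformVariation

/-- The integrand of the first variation, with the variation of the speed factor
`|γ'(u+w)| |γ'(u)|` replaced by twice the contribution of the endpoint `u`. -/
def symVariation (α : ℝ) (γ h : ℝ → Rn n) (u w : ℝ) : ℝ :=
  (2 * (1 / ‖γ (u + w) - γ u‖ ^ α - 1 / idist γ u w ^ α) * logSpeedVar γ h u -
    α * potentialVar α γ h u w) * (‖deriv γ (u + w)‖ * ‖deriv γ u‖)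

lemma symVariation_eq (α : ℝ) (γ h : ℝ → Rn n) (u w : ℝ) :
    symVariation α γ h u w = ohVariation α γ h u w + (ohIntegrand α γ u w * logSpeedVar γ h u -
      ohIntegrand α γ (u + w) (-w) * logSpeedVar γ h (u + w)) := by
  rw [ohIntegrand_add_neg, symVariation, ohVariation, ohIntegrand]
  ring

/-- The map `(u, w) ↦ (u + w, -w)` exchanges the two endpoints. -/
lemma UniformVariation.integral_symVariation (hv : UniformVariation γ h c M r) (hα : 0 ≤ α)
    (hbound : Integrable (fun p : ℝ × ℝ => energyBound α γ h p.1 p.2) pairMeasure) :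
    Integrable (fun p : ℝ × ℝ => symVariation α γ h p.1 p.2) pairMeasure ∧
    ∫ p, symVariation α γ h p.1 p.2 ∂pairMeasure =
      ∫ p, ohVariation α γ h p.1 p.2 ∂pairMeasure := by
  have energy := hv.integrable_ohIntegrand hα hbound
  have variation := (hv.hasDerivAt_integral_ohIntegrand hα hbound).1
  have log_cont := continuous_logSpeedVar hv.contDiff_left hv.regularCurve hv.contDiff_right
  have log_per := periodic_logSpeedVar hv.periodic_left hv.periodic_right
  obtain ⟨C, hC⟩ := exists_norm_le_of_periodic log_per one_ne_zero log_cont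
  let X : ℝ → ℝ → ℝ := fun u w => ohIntegrand α γ u w * logSpeedVar γ h u
  have hX : Integrable (fun p : ℝ × ℝ => X p.1 p.2) pairMeasure :=
    energy.mul_bdd (log_cont.comp continuous_fst).aestronglyMeasurable (.of_forall fun p => hC _)
  have hX_swap : Integrable (fun p : ℝ × ℝ => X (p.1 + p.2) (-p.2)) pairMeasure := by
    simp only [X, ohIntegrand_add_neg]
    exact energy.mul_bdd (log_cont.comp continuous_add).aestronglyMeasurable
      (.of_forall fun p => hC _)
  have difference : Integrable (fun p : ℝ × ℝ => X p.1 p.2 - X (p.1 + p.2) (-p.2)) pairMeasure :=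
    hX.sub hX_swap
  have periodic : ∀ w, Function.Periodic (fun u => X u w) 1 := fun w =>
    (periodic_ohIntegrand hv.periodic_left α w).mul log_per
  simp only [symVariation_eq]
  refine ⟨variation.add difference, ?_⟩
  rw [integral_add variation difference, integral_sub hX hX_swap,
    integral_pairMeasure_comp_add_neg periodic hX hX_swap, sub_self, add_zero]

end FirstVariation

theorem statement3_general {α : ℝ} (hα : 0 < α) {γ : ℝ → Rn n} (hγ : MemH1 ((α - 1) / 2) γ)
    (hinj : PerInjective γ) (hreg : RegularCurve γ) {h : ℝ → Rn n} (hh : MemH1 ((α - 1) / 2) h) :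
    ∃ d : ℝ,
      HasDirDeriv (oharaER α) γ h d ∧
      Tendsto (fun ε : ℝ => ∫ u in Ioc (0 : ℝ) 1, ∫ w in Wset ε,
          ((2 * (1 / ‖γ (u + w) - γ u‖ ^ α - 1 / idist γ u w ^ α) *
              ⟪(‖deriv γ u‖ ^ 2)⁻¹ • deriv γ u, deriv h u⟫
            - α * (⟪γ (u + w) - γ u, h (u + w) - h u⟫ / ‖γ (u + w) - γ u‖ ^ (α + 2)
                - deriv (fun τ : ℝ => idist (γ + τ • h) u w) 0 / idist γ u w ^ (α + 1)))
            * (‖deriv γ (u + w)‖ * ‖deriv γ u‖)))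
        (𝓝[>] (0 : ℝ)) (𝓝 d) := by
  obtain ⟨c, M, r, hv⟩ := exists_uniformVariation hγ.2.1 hγ.1 hinj hreg hh.2.1 hh.1
  have majorant := integrable_energyBound hα hγ hh
  obtain ⟨sym_integrable, sym_integral⟩ := hv.integral_symVariation hα.le majorant
  exact ⟨_, hv.hasDirDeriv_oharaER hα.le majorant,
    sym_integral ▸ tendsto_integral_Wset sym_integrable⟩

/-- For `α ∈ (2,3)`, an injective regular curve `γ ∈ H^{(1+α)/2,2}` and
`h ∈ H^{(1+α)/2,2}`, the first variation `δE^α(γ;h)` is given by the stated principal value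
(in particular, that limit exists). -/
theorem statement3 {n : ℕ} (hn : 2 ≤ n) {α : ℝ} (hα : α ∈ Ioo (2:ℝ) 3)
    {γ : ℝ → Rn n} (hγ : MemH1 ((α - 1) / 2) γ) (hinj : PerInjective γ)
    (hreg : RegularCurve γ) {h : ℝ → Rn n} (hh : MemH1 ((α - 1) / 2) h) :
    ∃ d : ℝ,
      HasDirDeriv (oharaER α) γ h d ∧
      Tendsto (fun ε : ℝ => ∫ u in Ioc (0:ℝ) 1, ∫ w in Wset ε,
          ((2 * (1 / ‖γ (u + w) - γ u‖ ^ α - 1 / idist γ u w ^ α) *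
              ⟪(‖deriv γ u‖ ^ 2)⁻¹ • deriv γ u, deriv h u⟫
            - α * (⟪γ (u + w) - γ u, h (u + w) - h u⟫ / ‖γ (u + w) - γ u‖ ^ (α + 2)
                - deriv (fun τ : ℝ => idist (γ + τ • h) u w) 0 / idist γ u w ^ (α + 1)))
            * (‖deriv γ (u + w)‖ * ‖deriv γ u‖)))
        (𝓝[>] (0:ℝ)) (𝓝 d) :=
  statement3_general (by linarith [hα.1]) hγ hinj hreg hh

end
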